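/- Let k be a field and let A and B be unital associative k-algebras. Then for every n ≥ 0 there is an isomorphism of k-vector spaces H_n(C^red_•(A ⊗_k B)) ≅ ⊕_{p+q=n} H_p(C^red_•(A)) ⊗_k H_q(C^red_•(B)); that is, the Hochschild homology of A ⊗_k B satisfies the Künneth formula HH_n(A ⊗_k B) ≅ ⊕_{p+q=n} HH_p(A) ⊗_k HH_q(B). -/

import Mathlib

/-!
The Hochschild homology of `A` is the homology of `A ⊗_{A ⊗ Aᵒᵖ} P`, where `P` is the reduced bar
resolution of `A`: a complex of free modules `(A ⊗ Aᵒᵖ) ⊗ Ā^{⊗n}` with an explicit `k`-linear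
contraction (`barRes`, `hochschild_eq`).

The tensor product of the bar resolutions of `A` and `B` is again a complex of free modules, over
`(A ⊗ Aᵒᵖ) ⊗ (B ⊗ Bᵒᵖ) ≅ T ⊗ Tᵒᵖ` with `T = A ⊗ B`, and the tensor product of the two contractions
is a contraction of it (`IsRetract.tot`, `tensRes`, `tensBar`). It has the same generator and
augmentation in degree `0` as the bar resolution of `T`, so the comparison theorem for free
resolutions (`comparison`) makes the two resolutions homotopy equivalent after tensoring with `T`
(`tensBar_comparison`). Tensoring the product resolution with `T` gives the tensor product of the
reduced Hochschild complexes of `A` and `B` (`shuf_ind_tensδ`), and the claim follows from the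
algebraic Künneth formula over a field (`kunneth`): every complex of vector spaces
deformation retracts onto its homology (`exists_retract`), and tensor products of such retractions
are retractions.

Free modules over `R` are written `R ⊗ V`, and an `R`-linear map `R ⊗ V → R ⊗ W` is recorded by its
restriction `V → R ⊗ W` to generators, so that all maps in sight are `k`-linear. The algebra `T` is
kept abstract, with a multiplicative linear isomorphism `T ≅ A ⊗ B`.
-/

open scoped TensorProduct
open PiTensorProduct

universe u

/-- `Ā = A / (k · 1_A)`, the underlying `k`-vector space of `A` modulo scalars. -/
abbrev RedQuot (k : Type u) [Field k] (A : Type u) [Ring A] [Algebra k A] :=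
  A ⧸ (Submodule.span k {(1 : A)})

/-- The canonical projection `A → Ā`. -/
def redPr (k : Type u) [Field k] (A : Type u) [Ring A] [Algebra k A] :
    A →ₗ[k] RedQuot k A :=
  Submodule.mkQ _

/-- The reduced Hochschild chains `C^red_n(A) = A ⊗ Ā^{⊗n}` (tensor products over `k`). -/
abbrev CRed (k : Type u) [Field k] (A : Type u) [Ring A] [Algebra k A] (n : ℕ) :=
  A ⊗[k] (⨂[k]^n (RedQuot k A))

/-- The unreduced Hochschild chains `C_n(A) = A ⊗ A^{⊗n}` (tensor products over `k`). -/
abbrev CUn (k : Type u) [Field k] (A : Type u) [Ring A] [Algebra k A] (n : ℕ) :=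
  A ⊗[k] (⨂[k]^n A)

variable (k : Type u) [Field k]

/-- The property of being the Hochschild differential of the reduced Hochschild complex
`C^red_•(A)`:
`b(a₀ ⊗ a₁ ⊗ ⋯ ⊗ aₘ) = ∑_{i=0}^{m-1} (-1)^i a₀ ⊗ ⋯ ⊗ aᵢ·aᵢ₊₁ ⊗ ⋯ ⊗ aₘ
  + (-1)^m aₘ·a₀ ⊗ a₁ ⊗ ⋯ ⊗ a_{m-1}`,
required for all lifts `a` of the classes in `Ā`; this quantification over lifts encodes
exactly the well-definedness of the descent of `b` to the reduced complex. -/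
def IsRedHochschildDiff (A : Type u) [Ring A] [Algebra k A]
    (b : ∀ n : ℕ, CRed k A (n + 1) →ₗ[k] CRed k A n) : Prop :=
  ∀ (n : ℕ) (x₀ : A) (a : Fin (n + 1) → A),
    b n (x₀ ⊗ₜ[k] tprod k (fun j => redPr k A (a j))) =
      (x₀ * a 0) ⊗ₜ[k] tprod k (fun j : Fin n => redPr k A (a j.succ))
      + (∑ i : Fin n, ((-1 : k) ^ ((i : ℕ) + 1)) •
          (x₀ ⊗ₜ[k] tprod k (fun j : Fin n => redPr k A
            (if (j : ℕ) < (i : ℕ) then a j.castSucc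
             else if (j : ℕ) = (i : ℕ) then a i.castSucc * a i.succ
             else a j.succ))))
      + ((-1 : k) ^ (n + 1)) •
          ((a (Fin.last n) * x₀) ⊗ₜ[k] tprod k (fun j : Fin n => redPr k A (a j.castSucc)))

/-- The property of being the Connes operator `B` of the reduced Hochschild complex:
`B(a₀ ⊗ ⋯ ⊗ aₙ) = ∑_{i=0}^{n} (-1)^{n·i} 1 ⊗ aᵢ ⊗ ⋯ ⊗ aₙ ⊗ a₀ ⊗ ⋯ ⊗ a_{i-1}`,
again required for all lifts. -/
def IsConnesOp (A : Type u) [Ring A] [Algebra k A]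
    (Bop : ∀ n : ℕ, CRed k A n →ₗ[k] CRed k A (n + 1)) : Prop :=
  ∀ (n : ℕ) (x₀ : A) (a : Fin n → A),
    Bop n (x₀ ⊗ₜ[k] tprod k (fun j => redPr k A (a j))) =
      ∑ i : Fin (n + 1), ((-1 : k) ^ (n * (i : ℕ))) •
        ((1 : A) ⊗ₜ[k] tprod k (fun j : Fin (n + 1) =>
          redPr k A ((Fin.cons x₀ a : Fin (n + 1) → A) (i + j))))

/-- Cycles of an `ℕ`-indexed chain complex (with `d n : M (n+1) → M n`):
everything in degree `0`, and `ker (d n)` in degree `n + 1`. -/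
def cyclesOf {M : ℕ → Type u} [∀ n, AddCommGroup (M n)] [∀ n, Module k (M n)]
    (d : ∀ n : ℕ, M (n + 1) →ₗ[k] M n) : ∀ n : ℕ, Submodule k (M n)
  | 0 => ⊤
  | (n + 1) => LinearMap.ker (d n)

/-- Homology of an `ℕ`-indexed chain complex in degree `n`:
`H_n = cycles_n / (boundaries_n ∩ cycles_n)`. -/
abbrev homologyOf {M : ℕ → Type u} [∀ n, AddCommGroup (M n)] [∀ n, Module k (M n)]
    (d : ∀ n : ℕ, M (n + 1) →ₗ[k] M n) (n : ℕ) :=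
  cyclesOf k d n ⧸ (LinearMap.range (d n)).comap (cyclesOf k d n).subtype

namespace HochschildKunneth

noncomputable section

/-! ### Homology and homotopy -/

section Homology

variable {k}
variable {C D : ℕ → Type u} [∀ n, AddCommGroup (C n)] [∀ n, Module k (C n)]
  [∀ n, AddCommGroup (D n)] [∀ n, Module k (D n)]

lemma chainMap_cycles {dC : ∀ n, C (n + 1) →ₗ[k] C n} {dD : ∀ n, D (n + 1) →ₗ[k] D n}
    (f : ∀ n, C n →ₗ[k] D n) (hf : ∀ n x, dD n (f (n + 1) x) = f n (dC n x)) (n : ℕ) :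
    ∀ x ∈ cyclesOf k dC n, f n x ∈ cyclesOf k dD n := by
  intro x hx
  cases n with
  | zero => trivial
  | succ n =>
    change dD n (f (n + 1) x) = 0
    rw [hf, show dC n x = 0 from hx, map_zero]

/-- The map induced on homology by a chain map. -/
def homologyMap {dC : ∀ n, C (n + 1) →ₗ[k] C n} {dD : ∀ n, D (n + 1) →ₗ[k] D n}
    (f : ∀ n, C n →ₗ[k] D n) (hf : ∀ n x, dD n (f (n + 1) x) = f n (dC n x)) (n : ℕ) :
    homologyOf k dC n →ₗ[k] homologyOf k dD n :=
  Submodule.mapQ _ _ ((f n).restrict (chainMap_cycles f hf n)) (by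
    rintro ⟨x, hx⟩ ⟨y, hy⟩
    exact ⟨f (n + 1) y, (hf n y).trans (congrArg (f n) hy)⟩)

lemma homologyMap_comp_of_homotopy
    {dC : ∀ n, C (n + 1) →ₗ[k] C n} {dD : ∀ n, D (n + 1) →ₗ[k] D n}
    (f : ∀ n, C n →ₗ[k] D n) (hf : ∀ n x, dD n (f (n + 1) x) = f n (dC n x))
    (g : ∀ n, D n →ₗ[k] C n) (hg : ∀ n x, dC n (g (n + 1) x) = g n (dD n x))
    (h : ∀ n, C n →ₗ[k] C (n + 1))
    (h0 : ∀ x, dC 0 (h 0 x) = g 0 (f 0 x) - x)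
    (hs : ∀ n x, dC (n + 1) (h (n + 1) x) + h n (dC n x) = g (n + 1) (f (n + 1) x) - x)
    (n : ℕ) (z : homologyOf k dC n) :
    homologyMap g hg n (homologyMap f hf n z) = z := by
  obtain ⟨⟨x, hx⟩, rfl⟩ := Submodule.Quotient.mk_surjective _ z
  refine (Submodule.Quotient.eq _).2 ?_
  cases n with
  | zero => exact ⟨h 0 x, h0 x⟩
  | succ n =>
    have := hs n x
    rw [show dC n x = 0 from hx, map_zero, add_zero] at this
    exact ⟨h (n + 1) x, this⟩

/-- Homotopy equivalent complexes have isomorphic homology. -/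
lemma homology_equiv_of_homotopy
    {dC : ∀ n, C (n + 1) →ₗ[k] C n} {dD : ∀ n, D (n + 1) →ₗ[k] D n}
    (f : ∀ n, C n →ₗ[k] D n) (hf : ∀ n x, dD n (f (n + 1) x) = f n (dC n x))
    (g : ∀ n, D n →ₗ[k] C n) (hg : ∀ n x, dC n (g (n + 1) x) = g n (dD n x))
    (h : ∀ n, C n →ₗ[k] C (n + 1))
    (h0 : ∀ x, dC 0 (h 0 x) = g 0 (f 0 x) - x)
    (hs : ∀ n x, dC (n + 1) (h (n + 1) x) + h n (dC n x) = g (n + 1) (f (n + 1) x) - x)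
    (h' : ∀ n, D n →ₗ[k] D (n + 1))
    (h0' : ∀ x, dD 0 (h' 0 x) = f 0 (g 0 x) - x)
    (hs' : ∀ n x, dD (n + 1) (h' (n + 1) x) + h' n (dD n x) = f (n + 1) (g (n + 1) x) - x)
    (n : ℕ) :
    Nonempty (homologyOf k dC n ≃ₗ[k] homologyOf k dD n) :=
  ⟨LinearEquiv.ofLinearMap (homologyMap f hf n) (homologyMap g hg n)
    (LinearMap.ext (homologyMap_comp_of_homotopy g hg f hf h' h0' hs' n))
    (LinearMap.ext (homologyMap_comp_of_homotopy f hf g hg h h0 hs n))⟩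

/-- Isomorphic complexes have isomorphic homology. -/
lemma homology_equiv_of_iso
    {dC : ∀ n, C (n + 1) →ₗ[k] C n} {dD : ∀ n, D (n + 1) →ₗ[k] D n}
    (f : ∀ n, C n ≃ₗ[k] D n) (hf : ∀ n x, dD n (f (n + 1) x) = f n (dC n x)) (n : ℕ) :
    Nonempty (homologyOf k dC n ≃ₗ[k] homologyOf k dD n) :=
  homology_equiv_of_homotopy (fun n => (f n).toLinearMap) hf (fun n => (f n).symm.toLinearMap)
    (fun n x => by
      apply (f n).injective
      have := hf n ((f (n + 1)).symm x)
      simp at this ⊢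
      exact this.symm)
    (fun _ => 0) (by simp) (by simp) (fun _ => 0) (by simp) (by simp) n

/-- A deformation retraction of a complex onto a graded vector space `E` with zero differential
identifies its homology with `E`. -/
lemma homology_equiv_of_retract {E : ℕ → Type u} [∀ n, AddCommGroup (E n)] [∀ n, Module k (E n)]
    {d : ∀ n, C (n + 1) →ₗ[k] C n} (i : ∀ n, E n →ₗ[k] C n) (p : ∀ n, C n →ₗ[k] E n)
    (h : ∀ n, C n →ₗ[k] C (n + 1))
    (di : ∀ n x, d n (i (n + 1) x) = 0) (pd : ∀ n x, p n (d n x) = 0)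
    (pi : ∀ n x, p n (i n x) = x)
    (h0 : ∀ x, d 0 (h 0 x) + i 0 (p 0 x) = x)
    (hs : ∀ n x, d (n + 1) (h (n + 1) x) + h n (d n x) + i (n + 1) (p (n + 1) x) = x) (n : ℕ) :
    Nonempty (homologyOf k d n ≃ₗ[k] E n) := by
  have hi : ∀ x, i n x ∈ cyclesOf k d n := by
    intro x
    cases n with
    | zero => trivial
    | succ n => exact di n x
  refine ⟨LinearEquiv.ofLinearMap
    (Submodule.liftQ _ (p n ∘ₗ (cyclesOf k d n).subtype) ?_)
    (Submodule.mkQ _ ∘ₗ (i n).codRestrict _ hi) ?_ ?_⟩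
  · rintro ⟨x, hx⟩ ⟨y, rfl⟩
    exact pd n y
  · ext x
    exact pi n x
  · refine LinearMap.ext fun z => ?_
    obtain ⟨⟨x, hx⟩, rfl⟩ := Submodule.Quotient.mk_surjective _ z
    refine (Submodule.Quotient.eq _).2 ?_
    cases n with
    | zero =>
      refine ⟨- h 0 x, ?_⟩
      change d 0 (- h 0 x) = i 0 (p 0 x) - x
      rw [map_neg, neg_eq_iff_add_eq_zero, ← add_sub_assoc, h0, sub_self]
    | succ n =>
      refine ⟨- h (n + 1) x, ?_⟩
      change d (n + 1) (- h (n + 1) x) = i (n + 1) (p (n + 1) x) - x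
      have := hs n x
      rw [show d n x = 0 from hx, map_zero, add_zero] at this
      rw [map_neg, neg_eq_iff_add_eq_zero, ← add_sub_assoc, this, sub_self]

end Homology

/-! ### Comparison of free resolutions -/

section Comparison

variable {k}
variable {N R V W X : Type u} [AddCommGroup N] [Module k N] [Ring R] [Algebra k R]
  [AddCommGroup V] [Module k V] [AddCommGroup W] [Module k W] [AddCommGroup X] [Module k X]

/-- For a right `R`-module `N` (with action `act`) and a linear map `φ : V → R ⊗ W`, that is, an
`R`-linear map `R ⊗ V → R ⊗ W` of free left modules, this is the map
`N ⊗ V = N ⊗_R (R ⊗ V) → N ⊗_R (R ⊗ W) = N ⊗ W`. -/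
def ind (act : N →ₗ[k] R →ₗ[k] N) (φ : V →ₗ[k] R ⊗[k] W) : N ⊗[k] V →ₗ[k] N ⊗[k] W :=
  TensorProduct.lift (LinearMap.mk₂ k (fun n v => (act n).rTensor W (φ v))
    (by intros; simp [LinearMap.rTensor_add])
    (by intros; simp [LinearMap.rTensor_smul])
    (by intros; simp) (by intros; simp))

@[simp] lemma ind_tmul (act : N →ₗ[k] R →ₗ[k] N) (φ : V →ₗ[k] R ⊗[k] W) (n : N) (v : V) :
    ind act φ (n ⊗ₜ v) = (act n).rTensor W (φ v) := rfl

/-- The `R`-linear extension `R ⊗ V → R ⊗ W` of `φ : V → R ⊗ W`. -/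
abbrev rext (φ : V →ₗ[k] R ⊗[k] W) : R ⊗[k] V →ₗ[k] R ⊗[k] W := ind (LinearMap.mul k R) φ

lemma ind_rTensor {act : N →ₗ[k] R →ₗ[k] N} (hact : ∀ n r r', act (act n r) r' = act n (r * r'))
    (φ : V →ₗ[k] R ⊗[k] W) (n : N) (z : R ⊗[k] V) :
    ind act φ ((act n).rTensor V z) = (act n).rTensor W (rext φ z) := by
  induction z with
  | zero => simp
  | add x y hx hy => simp only [map_add, hx, hy]
  | tmul r v =>
    simp only [LinearMap.rTensor_tmul, ind_tmul]
    rw [← LinearMap.rTensor_comp_apply]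
    congr 2
    ext r'
    simp [hact]

lemma ind_comp {act : N →ₗ[k] R →ₗ[k] N} (hact : ∀ n r r', act (act n r) r' = act n (r * r'))
    (ψ : W →ₗ[k] R ⊗[k] X) (φ : V →ₗ[k] R ⊗[k] W) (x : N ⊗[k] V) :
    ind act ψ (ind act φ x) = ind act (rext ψ ∘ₗ φ) x := by
  induction x with
  | zero => simp
  | add x y hx hy => simp only [map_add, hx, hy]
  | tmul n v => simp [ind_rTensor hact]

lemma mul_act (n r r' : R) :
    LinearMap.mul k R (LinearMap.mul k R n r) r' = LinearMap.mul k R n (r * r') := by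
  simp [mul_assoc]

lemma ind_add (act : N →ₗ[k] R →ₗ[k] N) (φ ψ : V →ₗ[k] R ⊗[k] W) :
    ind act (φ + ψ) = ind act φ + ind act ψ := by
  ext; simp

lemma ind_sub (act : N →ₗ[k] R →ₗ[k] N) (φ ψ : V →ₗ[k] R ⊗[k] W) :
    ind act (φ - ψ) = ind act φ - ind act ψ := by
  ext; simp

lemma ind_zero (act : N →ₗ[k] R →ₗ[k] N) : ind act (0 : V →ₗ[k] R ⊗[k] W) = 0 := by
  ext; simp

lemma ind_one {act : N →ₗ[k] R →ₗ[k] N} (hone : ∀ n, act n 1 = n) :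
    ind act (TensorProduct.mk k R V 1) = LinearMap.id := by
  ext; simp [hone]

lemma rext_one (φ : V →ₗ[k] R ⊗[k] W) (v : V) : rext φ (1 ⊗ₜ v) = φ v := by
  have : LinearMap.mul k R 1 = LinearMap.id := by ext; simp
  simp [this]

variable {V W : ℕ → Type u} [∀ n, AddCommGroup (V n)] [∀ n, Module k (V n)]
  [∀ n, AddCommGroup (W n)] [∀ n, Module k (W n)]

variable (k R V) in
/-- A complex of free left `R`-modules `R ⊗ V n`, together with a `k`-linear contracting homotopy
`s` in positive degrees. In degree `0` the homotopy leaves over a map `π` killing boundaries. -/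
structure FreeRes where
  /-- the differential on generators -/
  δ : ∀ n, V (n + 1) →ₗ[k] R ⊗[k] V n
  /-- the contracting homotopy -/
  s : ∀ n, R ⊗[k] V n →ₗ[k] R ⊗[k] V (n + 1)
  /-- the defect of the homotopy in degree `0` -/
  π : R ⊗[k] V 0 →ₗ[k] R ⊗[k] V 0
  dd : ∀ n v, rext (δ n) (δ (n + 1) v) = 0
  ds_zero : ∀ x, rext (δ 0) (s 0 x) + π x = x
  ds_succ : ∀ n x, rext (δ (n + 1)) (s (n + 1) x) + s n (rext (δ n) x) = x
  πd : ∀ x, π (rext (δ 0) x) = 0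

variable (P : FreeRes k R V) (Q : FreeRes k R W)

/-- The comparison map extending `f₀`, built recursively with the contraction of the target. -/
def compMap (f₀ : V 0 →ₗ[k] R ⊗[k] W 0) : ∀ n, V n →ₗ[k] R ⊗[k] W n
  | 0 => f₀
  | n + 1 => Q.s n ∘ₗ rext (compMap f₀ n) ∘ₗ P.δ n

variable {P Q}

lemma compMap_comm {f₀ : V 0 →ₗ[k] R ⊗[k] W 0} (hf : ∀ v, Q.π (rext f₀ (P.δ 0 v)) = 0) (n : ℕ)
    (v : V (n + 1)) :
    rext (Q.δ n) (compMap P Q f₀ (n + 1) v) = rext (compMap P Q f₀ n) (P.δ n v) := by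
  induction n with
  | zero =>
    have := Q.ds_zero (rext f₀ (P.δ 0 v))
    rw [hf, add_zero] at this
    exact this
  | succ n ih =>
    have := Q.ds_succ n (rext (compMap P Q f₀ (n + 1)) (P.δ (n + 1) v))
    rw [ind_comp mul_act, show rext (Q.δ n) ∘ₗ compMap P Q f₀ (n + 1) =
      rext (compMap P Q f₀ n) ∘ₗ P.δ n from LinearMap.ext ih, ← ind_comp mul_act, P.dd, map_zero,
      map_zero, add_zero] at this
    exact this

/-- The null-homotopy of a chain map `ψ` vanishing in degree `0`. -/
def nullHtpy (P : FreeRes k R V) (Q : FreeRes k R W) (ψ : ∀ n, V n →ₗ[k] R ⊗[k] W n) :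
    ∀ n, V n →ₗ[k] R ⊗[k] W (n + 1)
  | 0 => 0
  | n + 1 => Q.s (n + 1) ∘ₗ (ψ (n + 1) - rext (nullHtpy P Q ψ n) ∘ₗ P.δ n)

lemma nullHtpy_spec {ψ : ∀ n, V n →ₗ[k] R ⊗[k] W n} (h0 : ψ 0 = 0)
    (hψ : ∀ n v, rext (Q.δ n) (ψ (n + 1) v) = rext (ψ n) (P.δ n v)) (n : ℕ) (v : V (n + 1)) :
    rext (Q.δ (n + 1)) (nullHtpy P Q ψ (n + 1) v) + rext (nullHtpy P Q ψ n) (P.δ n v)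
      = ψ (n + 1) v := by
  -- it suffices that `ψ - h d` takes values in cycles
  suffices H : rext (Q.δ n) (ψ (n + 1) v - rext (nullHtpy P Q ψ n) (P.δ n v)) = 0 by
    have := Q.ds_succ n (ψ (n + 1) v - rext (nullHtpy P Q ψ n) (P.δ n v))
    rw [H, map_zero, add_zero] at this
    rw [← eq_sub_iff_add_eq]
    exact this
  rw [map_sub, hψ]
  induction n with
  | zero => simp [nullHtpy, h0, ind_zero]
  | succ n ih =>
    have key : rext (Q.δ (n + 1)) ∘ₗ nullHtpy P Q ψ (n + 1)
        = ψ (n + 1) - rext (nullHtpy P Q ψ n) ∘ₗ P.δ n := by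
      refine LinearMap.ext fun w => ?_
      have := Q.ds_succ n (ψ (n + 1) w - rext (nullHtpy P Q ψ n) (P.δ n w))
      rw [map_sub (rext (Q.δ n)), hψ, ih, map_zero, add_zero] at this
      exact this
    rw [ind_comp mul_act, key, ind_sub, LinearMap.sub_apply, ← ind_comp mul_act, P.dd]
    simp

/-- Chain map property of the comparison map after inducing up to a right module `N`. -/
lemma ind_compMap_comm {act : N →ₗ[k] R →ₗ[k] N}
    (hact : ∀ n r r', act (act n r) r' = act n (r * r'))
    {f₀ : V 0 →ₗ[k] R ⊗[k] W 0} (hf : ∀ v, Q.π (rext f₀ (P.δ 0 v)) = 0) (n : ℕ)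
    (x : N ⊗[k] V (n + 1)) :
    ind act (Q.δ n) (ind act (compMap P Q f₀ (n + 1)) x)
      = ind act (compMap P Q f₀ n) (ind act (P.δ n) x) := by
  rw [ind_comp hact, ind_comp hact]
  congr 2
  exact LinearMap.ext (compMap_comm hf n)

/-- The composite of the two comparison maps is homotopic to the identity. -/
lemma exists_ind_htpy {act : N →ₗ[k] R →ₗ[k] N}
    (hact : ∀ n r r', act (act n r) r' = act n (r * r')) (hone : ∀ n, act n 1 = n)
    {f₀ : V 0 →ₗ[k] R ⊗[k] W 0} (hf : ∀ v, Q.π (rext f₀ (P.δ 0 v)) = 0)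
    {g₀ : W 0 →ₗ[k] R ⊗[k] V 0} (hg : ∀ v, P.π (rext g₀ (Q.δ 0 v)) = 0)
    (hgf : ∀ v, rext g₀ (f₀ v) = 1 ⊗ₜ v) :
    ∃ h : ∀ n, N ⊗[k] V n →ₗ[k] N ⊗[k] V (n + 1),
      (∀ x, ind act (P.δ 0) (h 0 x)
        = ind act (compMap Q P g₀ 0) (ind act (compMap P Q f₀ 0) x) - x) ∧
      (∀ n x, ind act (P.δ (n + 1)) (h (n + 1) x) + h n (ind act (P.δ n) x)
        = ind act (compMap Q P g₀ (n + 1)) (ind act (compMap P Q f₀ (n + 1)) x) - x) := by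
  let ψ : ∀ n, V n →ₗ[k] R ⊗[k] V n := fun n =>
    rext (compMap Q P g₀ n) ∘ₗ compMap P Q f₀ n - TensorProduct.mk k R (V n) 1
  have ψ0 : ψ 0 = 0 := by
    ext v
    exact sub_eq_zero.2 (hgf v)
  have hψ : ∀ n v, rext (P.δ n) (ψ (n + 1) v) = rext (ψ n) (P.δ n v) := by
    intro n v
    simp only [ψ, ind_sub, LinearMap.sub_apply, LinearMap.comp_apply, map_sub,
      TensorProduct.mk_apply]
    rw [rext_one, ind_one (fun n => by simp), ind_compMap_comm mul_act hg, compMap_comm hf,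
      ind_comp mul_act, LinearMap.id_apply]
  refine ⟨fun n => ind act (nullHtpy P P ψ n), fun x => ?_, fun n x => ?_⟩
  · have : ind act (compMap Q P g₀ 0) (ind act (compMap P Q f₀ 0) x) - x = ind act (ψ 0) x := by
      rw [ind_sub, LinearMap.sub_apply, ind_comp hact, ind_one hone, LinearMap.id_apply]
    rw [this, ψ0]
    simp [nullHtpy, ind_zero]
  · have : ind act (compMap Q P g₀ (n + 1)) (ind act (compMap P Q f₀ (n + 1)) x) - x
        = ind act (ψ (n + 1)) x := by
      rw [ind_sub, LinearMap.sub_apply, ind_comp hact, ind_one hone, LinearMap.id_apply]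
    rw [this, ind_comp hact, ind_comp hact, ← LinearMap.add_apply, ← ind_add]
    congr 2
    exact LinearMap.ext (nullHtpy_spec ψ0 hψ n)

/-- Two free resolutions that agree in degree `0` compute the same homology after tensoring with
a right module `N` over `R`. -/
theorem comparison (P : FreeRes k R V) (Q : FreeRes k R W) {act : N →ₗ[k] R →ₗ[k] N}
    (hact : ∀ n r r', act (act n r) r' = act n (r * r')) (hone : ∀ n, act n 1 = n)
    {f₀ : V 0 →ₗ[k] R ⊗[k] W 0} (hf : ∀ v, Q.π (rext f₀ (P.δ 0 v)) = 0)
    {g₀ : W 0 →ₗ[k] R ⊗[k] V 0} (hg : ∀ v, P.π (rext g₀ (Q.δ 0 v)) = 0)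
    (hgf : ∀ v, rext g₀ (f₀ v) = 1 ⊗ₜ v) (hfg : ∀ v, rext f₀ (g₀ v) = 1 ⊗ₜ v) (n : ℕ) :
    Nonempty (homologyOf k (M := fun n => N ⊗[k] V n) (fun n => ind act (P.δ n)) n ≃ₗ[k]
      homologyOf k (M := fun n => N ⊗[k] W n) (fun n => ind act (Q.δ n)) n) := by
  obtain ⟨h, h0, hs⟩ := exists_ind_htpy hact hone hf hg hgf
  obtain ⟨h', h0', hs'⟩ := exists_ind_htpy hact hone hg hf hfg
  exact homology_equiv_of_homotopy (fun n => ind act (compMap P Q f₀ n))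
    (ind_compMap_comm hact hf) (fun n => ind act (compMap Q P g₀ n)) (ind_compMap_comm hact hg)
    h h0 hs h' h0' hs' n

end Comparison

/-! ### Tensor products of complexes -/

section Tot

open DirectSum

variable {k}
variable {C D C' D' : ℕ → Type u}
  [∀ n, AddCommGroup (C' n)] [∀ n, Module k (C' n)]
  [∀ n, AddCommGroup (D' n)] [∀ n, Module k (D' n)]
  [∀ n, AddCommGroup (C n)] [∀ n, Module k (C n)]
  [∀ n, AddCommGroup (D n)] [∀ n, Module k (D n)]

/-- Pairs of natural numbers with sum `n`. -/
abbrev Idx (n : ℕ) := {pq : ℕ × ℕ // pq.1 + pq.2 = n}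

variable (k C D) in
/-- The degree `n` part `⨁_{p+q=n} C p ⊗ D q` of the tensor product of two graded spaces. -/
abbrev Tot (n : ℕ) : Type u := ⨁ i : Idx n, C i.1.1 ⊗[k] D i.1.2

variable (k C D) in
/-- The inclusion of the summand `C p ⊗ D q`. -/
def tin {p q n : ℕ} (h : p + q = n) : C p ⊗[k] D q →ₗ[k] Tot k C D n :=
  lof k (Idx n) (fun i : Idx n => C i.1.1 ⊗[k] D i.1.2) ⟨(p, q), h⟩

lemma tot_ext {M : Type*} [AddCommGroup M] [Module k M] {n : ℕ} {f g : Tot k C D n →ₗ[k] M}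
    (H : ∀ p q (h : p + q = n) x y, f (tin k C D h (x ⊗ₜ y)) = g (tin k C D h (x ⊗ₜ y))) :
    f = g := by
  refine DirectSum.linearMap_ext k fun ⟨⟨p, q⟩, h⟩ => TensorProduct.ext' fun x y => H p q h x y

/-- The horizontal part `d ⊗ 1` of the total differential. -/
def totHor (dC : ∀ n, C (n + 1) →ₗ[k] C n) :
    ∀ p q n : ℕ, p + q = n + 1 → (C p ⊗[k] D q →ₗ[k] Tot k C D n)
  | 0, _, _, _ => 0
  | p + 1, q, n, h => tin k C D (show p + q = n by omega) ∘ₗ (dC p).rTensor (D q)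

/-- The vertical part `(-1)^p ⊗ d` of the total differential. -/
def totVer (dD : ∀ n, D (n + 1) →ₗ[k] D n) :
    ∀ p q n : ℕ, p + q = n + 1 → (C p ⊗[k] D q →ₗ[k] Tot k C D n)
  | _, 0, _, _ => 0
  | p, q + 1, n, h => ((-1 : k) ^ p) •
      (tin k C D (show p + q = n by omega) ∘ₗ (dD q).lTensor (C p))

/-- The differential `x ⊗ y ↦ d x ⊗ y + (-1)^|x| x ⊗ d y` of the tensor product complex. -/
def totD (dC : ∀ n, C (n + 1) →ₗ[k] C n) (dD : ∀ n, D (n + 1) →ₗ[k] D n) (n : ℕ) :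
    Tot k C D (n + 1) →ₗ[k] Tot k C D n :=
  toModule k (Idx (n + 1)) _ fun i =>
    totHor dC i.1.1 i.1.2 n i.2 + totVer dD i.1.1 i.1.2 n i.2

section
variable (dC : ∀ n, C (n + 1) →ₗ[k] C n) (dD : ∀ n, D (n + 1) →ₗ[k] D n)

lemma totD_tin {p q n : ℕ} (h : p + q = n + 1) (z : C p ⊗[k] D q) :
    totD dC dD n (tin k C D h z) = totHor dC p q n h z + totVer dD p q n h z := by
  rw [totD, tin, toModule_lof]; rfl

@[simp] lemma totD_ss {p q n : ℕ} (h : p + 1 + (q + 1) = n + 1) (x : C (p + 1)) (y : D (q + 1)) :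
    totD dC dD n (tin k C D h (x ⊗ₜ y)) =
      tin k C D (show p + (q + 1) = n by omega) (dC p x ⊗ₜ y) +
      ((-1 : k) ^ (p + 1)) • tin k C D (show p + 1 + q = n by omega) (x ⊗ₜ dD q y) := by
  rw [totD_tin]; rfl

@[simp] lemma totD_sz {p n : ℕ} (h : p + 1 + 0 = n + 1) (x : C (p + 1)) (y : D 0) :
    totD dC dD n (tin k C D h (x ⊗ₜ y)) =
      tin k C D (show p + 0 = n by omega) (dC p x ⊗ₜ y) := by
  rw [totD_tin]; simp [totHor, totVer]

@[simp] lemma totD_zs {q n : ℕ} (h : 0 + (q + 1) = n + 1) (x : C 0) (y : D (q + 1)) :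
    totD dC dD n (tin k C D h (x ⊗ₜ y)) =
      tin k C D (show 0 + q = n by omega) (x ⊗ₜ dD q y) := by
  rw [totD_tin]; simp [totHor, totVer]

/-- The tensor product of two degree-preserving maps. -/
def totMap (f : ∀ n, C n →ₗ[k] C' n) (g : ∀ n, D n →ₗ[k] D' n) (n : ℕ) :
    Tot k C D n →ₗ[k] Tot k C' D' n :=
  DirectSum.lmap fun i => TensorProduct.map (f i.1.1) (g i.1.2)

@[simp] lemma totMap_tin (f : ∀ n, C n →ₗ[k] C' n) (g : ∀ n, D n →ₗ[k] D' n) {p q n : ℕ}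
    (h : p + q = n) (x : C p) (y : D q) :
    totMap f g n (tin k C D h (x ⊗ₜ y)) = tin k C' D' h (f p x ⊗ₜ g q y) := by
  rw [totMap, tin, lmap_lof]; rfl

/-- Tensor products of chain maps are chain maps. -/
lemma totMap_comm {dC' : ∀ n, C' (n + 1) →ₗ[k] C' n} {dD' : ∀ n, D' (n + 1) →ₗ[k] D' n}
    {f : ∀ n, C n →ₗ[k] C' n} {g : ∀ n, D n →ₗ[k] D' n}
    (hf : ∀ n x, dC' n (f (n + 1) x) = f n (dC n x))
    (hg : ∀ n x, dD' n (g (n + 1) x) = g n (dD n x)) (n : ℕ) (z : Tot k C D (n + 1)) :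
    totD dC' dD' n (totMap f g (n + 1) z) = totMap f g n (totD dC dD n z) := by
  suffices totD dC' dD' n ∘ₗ totMap f g (n + 1) = totMap f g n ∘ₗ totD dC dD n from
    LinearMap.congr_fun this z
  refine tot_ext fun p q h x y => ?_
  rcases p with _ | p <;> rcases q with _ | q
  · omega
  all_goals simp [hf, hg]

/-- The homotopy `x ⊗ y ↦ h x ⊗ y + (-1)^|x| π x ⊗ h' y` on a tensor product complex. -/
def totH (h : ∀ n, C n →ₗ[k] C (n + 1)) (π : ∀ n, C n →ₗ[k] C n)
    (h' : ∀ n, D n →ₗ[k] D (n + 1)) (n : ℕ) : Tot k C D n →ₗ[k] Tot k C D (n + 1) :=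
  toModule k (Idx n) _ fun i =>
    tin k C D (show i.1.1 + 1 + i.1.2 = n + 1 by have := i.2; omega) ∘ₗ
      (h i.1.1).rTensor (D i.1.2) +
    ((-1 : k) ^ i.1.1) • (tin k C D (show i.1.1 + (i.1.2 + 1) = n + 1 by have := i.2; omega) ∘ₗ
      TensorProduct.map (π i.1.1) (h' i.1.2))

@[simp] lemma totH_tin (h : ∀ n, C n →ₗ[k] C (n + 1)) (π : ∀ n, C n →ₗ[k] C n)
    (h' : ∀ n, D n →ₗ[k] D (n + 1)) {p q n : ℕ} (e : p + q = n) (x : C p) (y : D q) :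
    totH h π h' n (tin k C D e (x ⊗ₜ y)) =
      tin k C D (show p + 1 + q = n + 1 by omega) (h p x ⊗ₜ y) +
      ((-1 : k) ^ p) • tin k C D (show p + (q + 1) = n + 1 by omega) (π p x ⊗ₜ h' q y) := by
  rw [totH, tin, toModule_lof]; rfl

lemma totD_totD (hC : ∀ n x, dC n (dC (n + 1) x) = 0) (hD : ∀ n x, dD n (dD (n + 1) x) = 0)
    (n : ℕ) (z : Tot k C D (n + 1 + 1)) : totD dC dD n (totD dC dD (n + 1) z) = 0 := by
  suffices totD dC dD n ∘ₗ totD dC dD (n + 1) = 0 from LinearMap.congr_fun this z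
  refine tot_ext fun p q h x y => ?_
  rcases p with _ | _ | p <;> rcases q with _ | _ | q <;> first | omega | skip
  all_goals first | (simp [hC, hD]; done) | (simp [hC, hD, pow_succ]; module)

variable {dC dD}
/-- Data of a chain homotopy `h` from the identity to `π`, with `π` vanishing on boundaries and
landing in cycles. -/
structure IsRetract (d : ∀ n, C (n + 1) →ₗ[k] C n) (h : ∀ n, C n →ₗ[k] C (n + 1))
    (π : ∀ n, C n →ₗ[k] C n) : Prop where
  zero : ∀ x, d 0 (h 0 x) + π 0 x = x
  succ : ∀ n x, d (n + 1) (h (n + 1) x) + h n (d n x) + π (n + 1) x = x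
  πd : ∀ n x, π n (d n x) = 0
  dπ : ∀ n x, d n (π (n + 1) x) = 0

variable {h : ∀ n, C n →ₗ[k] C (n + 1)} {π : ∀ n, C n →ₗ[k] C n}
  {h' : ∀ n, D n →ₗ[k] D (n + 1)} {π' : ∀ n, D n →ₗ[k] D n}

lemma tmul_split {M M' : Type u} [AddCommGroup M] [Module k M] [AddCommGroup M'] [Module k M']
    {a p x : M} {b p' y : M'} (h₁ : a + p = x) (h₂ : b + p' = y) :
    a ⊗ₜ[k] y + p ⊗ₜ[k] b + p ⊗ₜ[k] p' = x ⊗ₜ[k] y := by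
  rw [add_assoc, ← TensorProduct.tmul_add, h₂, ← TensorProduct.add_tmul, h₁]

/-- The tensor product of two homotopies `1 ≃ π` and `1 ≃ π'` is a homotopy `1 ≃ π ⊗ π'`. -/
lemma IsRetract.tot (HC : IsRetract dC h π) (HD : IsRetract dD h' π') :
    IsRetract (totD dC dD) (totH h π h') (totMap π π') where
  zero := by
    suffices totD dC dD 0 ∘ₗ totH h π h' 0 + totMap π π' 0 = LinearMap.id from
      LinearMap.congr_fun this
    refine tot_ext fun p q e x y => ?_
    obtain ⟨rfl, rfl⟩ : p = 0 ∧ q = 0 := by omega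
    have key := congrArg (tin k C D e) (tmul_split (HC.zero x) (HD.zero y))
    simp only [map_add] at key
    simpa [HC.dπ, add_assoc] using key
  succ := by
    intro n
    suffices totD dC dD (n + 1) ∘ₗ totH h π h' (n + 1) + totH h π h' n ∘ₗ totD dC dD n
        + totMap π π' (n + 1) = LinearMap.id from
      LinearMap.congr_fun this
    refine tot_ext fun p q e x y => ?_
    rcases p with _ | p <;> rcases q with _ | q
    · omega
    · have key := congrArg (tin k C D e) (tmul_split (HC.zero x) (HD.succ q y))
      simp only [map_add, TensorProduct.tmul_add, TensorProduct.add_tmul] at key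
      simp only [LinearMap.id_apply]
      refine Eq.trans ?_ key
      simp [HC.πd, HC.dπ]
      module
    · have key := congrArg (tin k C D e) (tmul_split (HC.succ p x) (HD.zero y))
      simp only [map_add, TensorProduct.tmul_add, TensorProduct.add_tmul] at key
      simp only [LinearMap.id_apply]
      refine Eq.trans ?_ key
      simp [HC.πd, HC.dπ]
      simp only [smul_smul, ← pow_add]
      simp
      module
    · have key := congrArg (tin k C D e) (tmul_split (HC.succ p x) (HD.succ q y))
      simp only [map_add, TensorProduct.tmul_add, TensorProduct.add_tmul] at key
      simp only [LinearMap.id_apply]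
      refine Eq.trans ?_ key
      simp [HC.πd, HC.dπ]
      simp only [smul_smul, ← pow_add]
      simp
      module
  πd := by
    intro n
    suffices totMap π π' n ∘ₗ totD dC dD n = 0 from LinearMap.congr_fun this
    refine tot_ext fun p q e x y => ?_
    rcases p with _ | p <;> rcases q with _ | q
    · omega
    all_goals simp [HC.πd, HD.πd]
  dπ := by
    intro n
    suffices totD dC dD n ∘ₗ totMap π π' (n + 1) = 0 from LinearMap.congr_fun this
    refine tot_ext fun p q e x y => ?_
    rcases p with _ | p <;> rcases q with _ | q
    · omega
    all_goals simp [HC.dπ, HD.dπ]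

end
end Tot

/-! ### The Künneth formula over a field -/

section Kunneth

open DirectSum

variable {k}
variable {C D : ℕ → Type u} [∀ n, AddCommGroup (C n)] [∀ n, Module k (C n)]
  [∀ n, AddCommGroup (D n)] [∀ n, Module k (D n)]

lemma exists_quasi_inverse {M M' : Type u} [AddCommGroup M] [Module k M] [AddCommGroup M']
    [Module k M'] (d : M →ₗ[k] M') : ∃ g : M' →ₗ[k] M, ∀ x, d (g (d x)) = d x := by
  obtain ⟨r, hr⟩ := d.rangeRestrict.exists_rightInverse_of_surjective d.range_rangeRestrict
  obtain ⟨g, hg⟩ := LinearMap.exists_extend r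
  refine ⟨g, fun x => ?_⟩
  have h1 := LinearMap.congr_fun hg (d.rangeRestrict x)
  have h2 := congrArg Subtype.val (LinearMap.congr_fun hr (d.rangeRestrict x))
  simp only [LinearMap.comp_apply, Submodule.subtype_apply, LinearMap.codRestrict_apply,
    LinearMap.rangeRestrict, LinearMap.id_apply] at h1 h2
  rw [h1, h2]

/-- Over a field, every complex retracts by deformation onto its homology. -/
lemma exists_retract (d : ∀ n, C (n + 1) →ₗ[k] C n) (dd : ∀ n x, d n (d (n + 1) x) = 0) :
    ∃ (i : ∀ n, homologyOf k d n →ₗ[k] C n) (p : ∀ n, C n →ₗ[k] homologyOf k d n)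
      (h : ∀ n, C n →ₗ[k] C (n + 1)),
      (∀ n x, p n (i n x) = x) ∧ (∀ n x, p n (d n x) = 0) ∧ (∀ n x, d n (i (n + 1) x) = 0) ∧
      IsRetract d h (fun n => i n ∘ₗ p n) := by
  choose g hg using fun n => exists_quasi_inverse (d n)
  choose σ hσ using fun n => ((LinearMap.range (d n)).comap
    (cyclesOf k d n).subtype).mkQ.exists_rightInverse_of_surjective (Submodule.range_mkQ _)
  -- `r` is the projection onto cycles determined by `g`
  let r : ∀ n, C n →ₗ[k] C n := fun n => match n with
    | 0 => LinearMap.id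
    | n + 1 => LinearMap.id - g n ∘ₗ d n
  have r0 : ∀ x, r 0 x = x := fun _ => rfl
  have rs : ∀ n x, r (n + 1) x = x - g n (d n x) := fun _ _ => rfl
  have rmem : ∀ n x, r n x ∈ cyclesOf k d n := by
    rintro (_ | n) x
    · trivial
    · change d n (r (n + 1) x) = 0
      rw [rs, map_sub, hg, sub_self]
  have rcyc : ∀ n x, x ∈ cyclesOf k d n → r n x = x := by
    rintro (_ | n) x hx
    · rfl
    · rw [rs, show d n x = 0 from hx, map_zero, sub_zero]
  have dmem : ∀ n x, d n x ∈ cyclesOf k d n := by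
    rintro (_ | n) x
    · trivial
    · exact dd n x
  let i : ∀ n, homologyOf k d n →ₗ[k] C n := fun n => (cyclesOf k d n).subtype ∘ₗ σ n
  let p : ∀ n, C n →ₗ[k] homologyOf k d n := fun n =>
    Submodule.mkQ _ ∘ₗ (r n).codRestrict _ (rmem n)
  have hσ' : ∀ n x, Submodule.mkQ _ (σ n x) = x := fun n x => LinearMap.congr_fun (hσ n) x
  have pcyc : ∀ n (x : cyclesOf k d n), p n x = Submodule.mkQ _ x := by
    intro n x
    change Submodule.mkQ _ _ = _
    congr 1
    exact Subtype.ext (rcyc n x x.2)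
  have pi : ∀ n x, p n (i n x) = x := fun n x => (pcyc n (σ n x)).trans (hσ' n x)
  have pd : ∀ n x, p n (d n x) = 0 := by
    intro n x
    refine (pcyc n ⟨d n x, dmem n x⟩).trans ?_
    exact (Submodule.Quotient.mk_eq_zero _).2 ⟨x, rfl⟩
  have di : ∀ n x, d n (i (n + 1) x) = 0 := fun n x => (σ (n + 1) x).2
  have hb : ∀ n x, ∃ y, d n y = r n x - i n (p n x) := by
    intro n x
    have : Submodule.mkQ _ ((r n).codRestrict _ (rmem n) x) = Submodule.mkQ _ (σ n (p n x)) :=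
      (hσ' n _).symm
    exact (Submodule.Quotient.eq _).1 this
  let h : ∀ n, C n →ₗ[k] C (n + 1) := fun n => g n ∘ₗ (r n - i n ∘ₗ p n)
  have dh : ∀ n x, d n (h n x) = r n x - i n (p n x) := by
    intro n x
    obtain ⟨y, hy⟩ := hb n x
    change d n (g n (r n x - i n (p n x))) = _
    rw [← hy, hg]
  have hd : ∀ n x, h n (d n x) = g n (d n x) := by
    intro n x
    change g n (r n (d n x) - i n (p n (d n x))) = _
    rw [pd, map_zero, sub_zero, rcyc n _ (dmem n x)]
  refine ⟨i, p, h, pi, pd, di, ⟨fun x => ?_, fun n x => ?_, fun n x => ?_, fun n x => ?_⟩⟩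
  · rw [dh, r0]; simp
  · rw [dh, hd, rs]
    simp only [LinearMap.comp_apply]
    abel
  · simp [pd]
  · exact di n _

/-- The Künneth formula for complexes over a field. -/
theorem kunneth (dC : ∀ n, C (n + 1) →ₗ[k] C n) (dD : ∀ n, D (n + 1) →ₗ[k] D n)
    (hC : ∀ n x, dC n (dC (n + 1) x) = 0) (hD : ∀ n x, dD n (dD (n + 1) x) = 0) (n : ℕ) :
    Nonempty (homologyOf k (totD dC dD) n ≃ₗ[k] Tot k (homologyOf k dC) (homologyOf k dD) n) := by
  obtain ⟨i, p, h, pi, pd, di, H⟩ := exists_retract dC hC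
  obtain ⟨i', p', h', pi', pd', di', H'⟩ := exists_retract dD hD
  have HT := H.tot H'
  have e : ∀ n x, totMap (fun n => i n ∘ₗ p n) (fun n => i' n ∘ₗ p' n) n x
      = totMap i i' n (totMap p p' n x) := by
    intro n
    suffices totMap (fun n => i n ∘ₗ p n) (fun n => i' n ∘ₗ p' n) n
      = totMap i i' n ∘ₗ totMap p p' n from LinearMap.congr_fun this
    exact tot_ext fun p q h x y => by simp
  refine homology_equiv_of_retract (totMap i i') (totMap p p') 
    (totH h (fun n => i n ∘ₗ p n) h') ?_ ?_ ?_ ?_ ?_ n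
  · intro n x
    rw [totMap_comm (dC := fun _ => 0) (dD := fun _ => 0) (by simpa using di) (by simpa using di')]
    rw [show totD (k := k) (C := homologyOf k dC) (D := homologyOf k dD)
      (fun _ => 0) (fun _ => 0) n = 0 from ?_]
    · simp
    · refine tot_ext fun p q h x y => ?_
      rcases p with _ | p <;> rcases q with _ | q
      · omega
      all_goals simp
  · intro n
    suffices totMap p p' n ∘ₗ totD dC dD n = 0 from LinearMap.congr_fun this
    refine tot_ext fun p q h x y => ?_
    rcases p with _ | p <;> rcases q with _ | q
    · omega
    all_goals simp [pd, pd']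
  · intro n
    suffices totMap p p' n ∘ₗ totMap i i' n = LinearMap.id from LinearMap.congr_fun this
    exact tot_ext fun p q h x y => by simp [pi, pi']
  · intro x
    rw [← e]
    exact HT.zero x
  · intro n x
    rw [← e]
    exact HT.succ n x

/-- The pairs with sum `n` are enumerated by their first entry. -/
def idxEquiv (n : ℕ) : Fin (n + 1) ≃ Idx n where
  toFun p := ⟨(p, n - p), by have := p.2; simp only; omega⟩
  invFun i := ⟨i.1.1, by have := i.2; omega⟩
  left_inv _ := rfl
  right_inv i := by
    apply Subtype.ext
    have := i.2
    ext <;> simp only <;> omega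

/-- Reindexing of `⨁_{p+q=n}` by `p : Fin (n + 1)`, with `q = n - p`. -/
def totEquivFin (n : ℕ) :
    Tot k C D n ≃ₗ[k] ⨁ p : Fin (n + 1), C (p : ℕ) ⊗[k] D (n - (p : ℕ)) :=
  DirectSum.lequivCongrLeft k (idxEquiv n).symm

end Kunneth

/-! ### The reduced bar resolution -/

section Bar

open MulOpposite

variable (A : Type u) [Ring A] [Algebra k A]

/-- The enveloping algebra `A ⊗ Aᵒᵖ`. -/
def Env : Type u := A ⊗[k] Aᵐᵒᵖ

instance : Ring (Env k A) := inferInstanceAs (Ring (A ⊗[k] Aᵐᵒᵖ))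

instance : Algebra k (Env k A) := inferInstanceAs (Algebra k (A ⊗[k] Aᵐᵒᵖ))

/-- The underlying vector space of the enveloping algebra is `A ⊗ A`. -/
def envEquiv : Env k A ≃ₗ[k] A ⊗[k] A :=
  (show Env k A ≃ₗ[k] A ⊗[k] Aᵐᵒᵖ from LinearEquiv.refl k (A ⊗[k] Aᵐᵒᵖ)) ≪≫ₗ
    TensorProduct.congr (LinearEquiv.refl k A) (opLinearEquiv k).symm

/-- The element `a ⊗ bᵒᵖ` of the enveloping algebra, as a bilinear map. -/
def etm : A →ₗ[k] A →ₗ[k] Env k A := (TensorProduct.mk k A A).compr₂ (envEquiv k A).symm.toLinearMap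

variable {A} in
/-- The element `a ⊗ bᵒᵖ` of the enveloping algebra. -/
abbrev et (a b : A) : Env k A := etm k A a b

/-- The space of generators `Ā^{⊗n}` of the reduced bar resolution. -/
def BarV (n : ℕ) : Type u := ⨂[k]^n (RedQuot k A)

instance (n : ℕ) : AddCommGroup (BarV k A n) := inferInstanceAs (AddCommGroup (⨂[k]^n (RedQuot k A)))

instance (n : ℕ) : Module k (BarV k A n) := inferInstanceAs (Module k (⨂[k]^n (RedQuot k A)))

/-- `BarV k A n` is `Ā^{⊗n}`. -/
def barVEquiv (n : ℕ) : ⨂[k]^n (RedQuot k A) ≃ₗ[k] BarV k A n :=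
  LinearEquiv.refl k (⨂[k]^n (RedQuot k A))

variable {A} in
@[simp] lemma et_mul (a b a' b' : A) : et k a b * et k a' b' = et k (a * a') (b' * b) :=
  Algebra.TensorProduct.tmul_mul_tmul a a' (op b) (op b')

lemma one_eq_et : (1 : Env k A) = et k 1 1 := rfl

variable {A} in
@[simp] lemma envEquiv_et (a b : A) : envEquiv k A (et k a b) = a ⊗ₜ b :=
  (envEquiv k A).apply_symm_apply _

variable {A k} in
lemma et_ind {p : Env k A → Prop} (h0 : p 0) (hadd : ∀ x y, p x → p y → p (x + y))
    (h : ∀ a b, p (et k a b)) (r) : p r := by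
  obtain ⟨r, rfl⟩ := (envEquiv k A).symm.surjective r
  induction r with
  | zero => rwa [map_zero]
  | add x y hx hy => rw [map_add]; exact hadd _ _ hx hy
  | tmul a b => exact h a b

/-- The isomorphism `Ā ⊗ Ā^{⊗n} ≅ Ā^{⊗(n+1)}`. -/
def consEquiv (n : ℕ) : RedQuot k A ⊗[k] BarV k A n ≃ₗ[k] BarV k A (n + 1) :=
  (TensorProduct.congr (PiTensorProduct.subsingletonEquiv (R := k)
    (s := fun _ : Fin 1 => RedQuot k A) (0 : Fin 1)).symm (barVEquiv k A n).symm) ≪≫ₗ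
  PiTensorProduct.tmulEquiv k (RedQuot k A) (ι := Fin 1) (ι₂ := Fin n) ≪≫ₗ
  PiTensorProduct.reindex k (fun _ => RedQuot k A)
    (finSumFinEquiv.trans (finCongr (Nat.add_comm 1 n))) ≪≫ₗ barVEquiv k A (n + 1)

lemma consEquiv_tprod (n : ℕ) (x : RedQuot k A) (v : Fin n → RedQuot k A) :
    consEquiv k A n (x ⊗ₜ barVEquiv k A n (tprod k v))
      = barVEquiv k A (n + 1) (tprod k (Fin.cons x v : Fin (n + 1) → RedQuot k A)) := by
  simp only [consEquiv, LinearEquiv.trans_apply, TensorProduct.congr_tmul,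
    LinearEquiv.symm_apply_apply, PiTensorProduct.subsingletonEquiv_symm_apply',
    PiTensorProduct.tmulEquiv_apply]
  congr 1
  refine (PiTensorProduct.reindex_tprod _ _).trans ?_
  congr 1
  funext j
  refine Fin.cases ?_ (fun j => ?_) j
  · rfl
  · have : (finSumFinEquiv.trans (finCongr (Nat.add_comm 1 n))).symm j.succ = Sum.inr j := by
      rw [Equiv.symm_apply_eq]
      ext
      simp [Nat.add_comm]
    rw [this]
    rfl

variable {k A}

lemma redPr_surjective : Function.Surjective (redPr k A) := Submodule.mkQ_surjective _

lemma redPr_one : redPr k A 1 = 0 :=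
  (Submodule.Quotient.mk_eq_zero _).2 (Submodule.mem_span_singleton_self _)

variable (k A) in
/-- A linear section of `A → Ā`. -/
def sec : RedQuot k A →ₗ[k] A :=
  ((redPr k A).exists_rightInverse_of_surjective
    (LinearMap.range_eq_top.2 redPr_surjective)).choose

lemma exists_sec (a : A) : ∃ c : k, sec k A (redPr k A a) = a + c • 1 := by
  have h : redPr k A (sec k A (redPr k A a)) = redPr k A a :=
    LinearMap.congr_fun ((redPr k A).exists_rightInverse_of_surjective
      (LinearMap.range_eq_top.2 redPr_surjective)).choose_spec (redPr k A a)
  obtain ⟨c, hc⟩ := Submodule.mem_span_singleton.1 ((Submodule.Quotient.eq _).1 h)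
  exact ⟨c, by rw [hc]; abel⟩

variable (k A) in
/-- The contraction `(a ⊗ b) ⊗ x ↦ (1 ⊗ b) ⊗ (ā ⊗ x)` of the bar resolution. -/
def barS (n : ℕ) : Env k A ⊗[k] BarV k A n →ₗ[k] Env k A ⊗[k] BarV k A (n + 1) :=
  TensorProduct.map (etm k A 1)
    ((consEquiv k A n).toLinearMap ∘ₗ (redPr k A).rTensor _) ∘ₗ
  (TensorProduct.assoc k A A (BarV k A n)).toLinearMap ∘ₗ
  ((TensorProduct.comm k A A).toLinearMap ∘ₗ (envEquiv k A).toLinearMap).rTensor _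

@[simp] lemma barS_tmul (n : ℕ) (a b : A) (x : BarV k A n) :
    barS k A n (et k a b ⊗ₜ x) = et k 1 b ⊗ₜ consEquiv k A n (redPr k A a ⊗ₜ x) := by
  simp [barS]

variable (k A) in
/-- The multiplication `A ⊗ Aᵒᵖ → A`, the augmentation of the bar resolution. -/
def envMul : Env k A →ₗ[k] A :=
  LinearMap.mul' k A ∘ₗ (envEquiv k A).toLinearMap

@[simp] lemma envMul_et (a b : A) : envMul k A (et k a b) = a * b := by simp [envMul]

/-- The bar differential on generators, `(ā ⊗ x) ↦ (1 - e) ((a ⊗ 1) ⊗ x)`, where `e` is to be the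
composite of contraction and differential one degree lower. -/
def barGen {n : ℕ} (e : Env k A ⊗[k] BarV k A n →ₗ[k] Env k A ⊗[k] BarV k A n) :
    BarV k A (n + 1) →ₗ[k] Env k A ⊗[k] BarV k A n :=
  (LinearMap.id - e) ∘ₗ
    TensorProduct.map ((etm k A).flip 1 ∘ₗ sec k A) LinearMap.id ∘ₗ
    (consEquiv k A n).symm.toLinearMap

variable (k A) in
/-- The composite `s d` of contraction and differential; in degree `0`, `(a ⊗ b) ↦ 1 ⊗ a b`. -/
def barE : ∀ n, Env k A ⊗[k] BarV k A n →ₗ[k] Env k A ⊗[k] BarV k A n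
  | 0 => (etm k A 1 ∘ₗ envMul k A).rTensor _
  | n + 1 => barS k A n ∘ₗ rext (barGen (barE n))

variable (k A) in
/-- The differential of the reduced bar resolution on generators. -/
def barδ (n : ℕ) : BarV k A (n + 1) →ₗ[k] Env k A ⊗[k] BarV k A n := barGen (barE k A n)

lemma barE_succ (n : ℕ) (z) : barE k A (n + 1) z = barS k A n (rext (barδ k A n) z) := rfl

lemma barE_zero (r : Env k A) (x : BarV k A 0) :
    barE k A 0 (r ⊗ₜ x) = et k 1 (envMul k A r) ⊗ₜ x := rfl

/-- Induction principle: linear maps on `(A ⊗ Aᵒᵖ) ⊗ V` agree if they do on `(a ⊗ b) ⊗ x`. -/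
lemma env_ind {V : Type u} [AddCommGroup V] [Module k V] {p : Env k A ⊗[k] V → Prop}
    (h0 : p 0) (hadd : ∀ x y, p x → p y → p (x + y))
    (h : ∀ (a b : A) (x : V), p (et k a b ⊗ₜ x)) (z) : p z := by
  induction z with
  | zero => exact h0
  | add x y hx hy => exact hadd x y hx hy
  | tmul r x =>
    induction r using et_ind with
    | h0 => rwa [TensorProduct.zero_tmul]
    | hadd r r' hr hr' => rw [TensorProduct.add_tmul]; exact hadd _ _ hr hr'
    | h a b => exact h a b x

lemma bar_ind {n : ℕ} {p : BarV k A (n + 1) → Prop} (h0 : p 0)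
    (hadd : ∀ x y, p x → p y → p (x + y))
    (h : ∀ (a : A) (x : BarV k A n), p (consEquiv k A n (redPr k A a ⊗ₜ x))) (z) : p z := by
  obtain ⟨z, rfl⟩ := (consEquiv k A n).surjective z
  induction z with
  | zero => rwa [map_zero]
  | add x y hx hy => rw [map_add]; exact hadd _ _ hx hy
  | tmul a x =>
    obtain ⟨a, rfl⟩ := redPr_surjective a
    exact h a x

lemma barS_barS (n : ℕ) (z) : barS k A (n + 1) (barS k A n z) = 0 := by
  refine env_ind (p := fun z => barS k A (n + 1) (barS k A n z) = 0) (by simp)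
    (fun x y hx hy => by simp [hx, hy]) (fun a b x => ?_) z
  simp [redPr_one]

lemma barS_barE (n : ℕ) (z) : barS k A n (barE k A n z) = 0 := by
  cases n with
  | zero =>
    refine env_ind (p := fun z => barS k A 0 (barE k A 0 z) = 0) (by simp)
      (fun x y hx hy => by simp only [map_add, hx, hy, add_zero]) (fun a b x => ?_) z
    simp [barE_zero, redPr_one]
  | succ n => exact barS_barS n _

lemma barGen_of_fix {n : ℕ} {e : Env k A ⊗[k] BarV k A n →ₗ[k] Env k A ⊗[k] BarV k A n}
    (he : ∀ x, e (et k 1 1 ⊗ₜ x) = et k 1 1 ⊗ₜ x) (a : A) (x : BarV k A n) :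
    barGen e (consEquiv k A n (redPr k A a ⊗ₜ x)) = et k a 1 ⊗ₜ x - e (et k a 1 ⊗ₜ x) := by
  obtain ⟨c, hc⟩ := exists_sec (k := k) a
  simp [barGen, hc, he, ← TensorProduct.smul_tmul', TensorProduct.add_tmul]

/-- The composite `s d` fixes the generators `1 ⊗ x`; hence `barδ` does not depend on the section of
`A → Ā`. -/
lemma barE_one (n : ℕ) (x : BarV k A n) :
    barE k A n (et k 1 1 ⊗ₜ x) = et k 1 1 ⊗ₜ x := by
  induction n with
  | zero => simp [barE_zero]
  | succ n ih =>
    refine bar_ind (p := fun x => barE k A (n + 1) (et k 1 1 ⊗ₜ x) = et k 1 1 ⊗ₜ x)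
      (by simp) (fun x y hx hy => by simp only [TensorProduct.tmul_add, map_add, hx, hy])
      (fun a x => ?_) x
    rw [barE_succ, ← one_eq_et, rext_one, barδ, barGen_of_fix ih, map_sub,
      barS_barE, sub_zero, barS_tmul]
    rfl

lemma barδ_cons (n : ℕ) (a : A) (x : BarV k A n) :
    barδ k A n (consEquiv k A n (redPr k A a ⊗ₜ x))
      = et k a 1 ⊗ₜ x - barE k A n (et k a 1 ⊗ₜ x) := barGen_of_fix (barE_one n) a x

lemma barS_right (n : ℕ) (b : A) (z) :
    barS k A n ((LinearMap.mul k (Env k A) (et k 1 b)).rTensor _ z)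
      = (LinearMap.mul k (Env k A) (et k 1 b)).rTensor _ (barS k A n z) := by
  refine env_ind (p := fun z => barS k A n ((LinearMap.mul k (Env k A) (et k 1 b)).rTensor _ z)
      = (LinearMap.mul k (Env k A) (et k 1 b)).rTensor _ (barS k A n z)) (by simp)
    (fun x y hx hy => by simp only [map_add, hx, hy]) (fun a b x => ?_) z
  simp

lemma barE_right (n : ℕ) (b : A) (z) :
    barE k A n ((LinearMap.mul k (Env k A) (et k 1 b)).rTensor _ z)
      = (LinearMap.mul k (Env k A) (et k 1 b)).rTensor _ (barE k A n z) := by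
  cases n with
  | zero =>
    refine env_ind (p := fun z => barE k A 0 ((LinearMap.mul k (Env k A) (et k 1 b)).rTensor _ z)
      = (LinearMap.mul k (Env k A) (et k 1 b)).rTensor _ (barE k A 0 z)) (by simp)
      (fun x y hx hy => by simp only [map_add, hx, hy]) (fun a b x => ?_) z
    simp [barE_zero, mul_assoc]
  | succ n => rw [barE_succ, ind_rTensor mul_act, barS_right, barE_succ]

lemma bar_ds (n : ℕ) (z) : rext (barδ k A n) (barS k A n z) + barE k A n z = z := by
  refine env_ind (p := fun z => rext (barδ k A n) (barS k A n z) + barE k A n z = z) (by simp)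
    (fun x y hx hy => ?_) (fun a b x => ?_) z
  · simp only [map_add]
    rw [add_add_add_comm, hx, hy]
  · have : et k a b ⊗ₜ[k] x
        = (LinearMap.mul k (Env k A) (et k 1 b)).rTensor _ (et k a 1 ⊗ₜ[k] x) := by simp
    rw [barS_tmul, ind_tmul, barδ_cons, map_sub, ← this, ← barE_right, ← this]
    abel

lemma envMul_mul (r r' : Env k A) :
    envMul k A (r * et k 1 (envMul k A r')) = envMul k A (r * r') := by
  induction r using et_ind with
  | h0 => simp
  | hadd x y hx hy => simp only [add_mul, map_add, hx, hy]
  | h a b =>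
    induction r' using et_ind with
    | h0 => simp
    | hadd x y hx hy => simp only [map_add, mul_add, hx, hy]
    | h a' b' => simp [mul_assoc]

/-- The augmentation kills boundaries. -/
lemma envMul_barδ (z) : (envMul k A).rTensor _ (rext (barδ k A 0) z) = 0 := by
  induction z with
  | zero => simp
  | add x y hx hy => simp only [map_add, hx, hy, add_zero]
  | tmul r x =>
    refine bar_ind (p := fun x => (envMul k A).rTensor _ (rext (barδ k A 0) (r ⊗ₜ x)) = 0)
      (by simp) (fun x y hx hy => by simp only [TensorProduct.tmul_add, map_add, hx, hy, add_zero])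
      (fun a x => ?_) x
    rw [ind_tmul, barδ_cons, barE_zero, map_sub, map_sub]
    simp only [LinearMap.rTensor_tmul, LinearMap.mul_apply', envMul_mul, sub_self]

lemma barE_zero_eq (z) :
    barE k A 0 z = (etm k A 1).rTensor _ ((envMul k A).rTensor _ z) := by
  rw [← LinearMap.rTensor_comp_apply]; rfl

lemma barE_d (n : ℕ) (z) : barE k A n (rext (barδ k A n) z) = 0 := by
  induction n with
  | zero => rw [barE_zero_eq, envMul_barδ, map_zero]
  | succ n ih =>
    rw [barE_succ, ind_comp mul_act, show rext (barδ k A n) ∘ₗ barδ k A (n + 1) = 0 from ?_]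
    · simp [ind_zero]
    refine LinearMap.ext fun v => ?_
    refine bar_ind (p := fun v => rext (barδ k A n) (barδ k A (n + 1) v) = 0)
      (by simp) (fun x y hx hy => by simp only [map_add, hx, hy, add_zero]) (fun a x => ?_) v
    have := bar_ds n (rext (barδ k A n) (et k a 1 ⊗ₜ x))
    rw [ih, add_zero] at this
    rw [barδ_cons, map_sub, barE_succ, this, sub_self]

lemma bar_dd (n : ℕ) (v) : rext (barδ k A n) (barδ k A (n + 1) v) = 0 := by
  refine bar_ind (p := fun v => rext (barδ k A n) (barδ k A (n + 1) v) = 0)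
    (by simp) (fun x y hx hy => by simp only [map_add, hx, hy, add_zero]) (fun a x => ?_) v
  have := bar_ds n (rext (barδ k A n) (et k a 1 ⊗ₜ x))
  rw [barE_d, add_zero] at this
  rw [barδ_cons, map_sub, barE_succ, this, sub_self]

variable (k A) in
/-- The reduced bar resolution of `A`. -/
def barRes : FreeRes k (Env k A) (BarV k A) where
  δ := barδ k A
  s := barS k A
  π := barE k A 0
  dd := bar_dd
  ds_zero := bar_ds 0
  ds_succ n := bar_ds (n + 1)
  πd := barE_d 0

variable (k A) in
/-- The right action `a · (x ⊗ y) = y a x` of `A ⊗ Aᵒᵖ` on `A`. -/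
def envAct : A →ₗ[k] Env k A →ₗ[k] A :=
  (TensorProduct.lift (LinearMap.mk₂ k
    (fun (x y : A) => LinearMap.mulLeft k y ∘ₗ LinearMap.mulRight k x)
    (by intros; ext; simp [mul_add]) (by intros; ext; simp) (by intros; ext; simp [add_mul])
    (by intros; ext; simp)) ∘ₗ (envEquiv k A).toLinearMap).flip

@[simp] lemma envAct_et (a x y : A) : envAct k A a (et k x y) = y * (a * x) := by
  simp [envAct]

lemma envAct_act (a : A) (r r' : Env k A) :
    envAct k A (envAct k A a r) r' = envAct k A a (r * r') := by
  induction r using et_ind with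
  | h0 => simp
  | hadd x y hx hy => simp only [map_add, add_mul, LinearMap.add_apply, hx, hy]
  | h x y =>
    induction r' using et_ind with
    | h0 => simp
    | hadd x y hx hy => simp only [map_add, mul_add, hx, hy]
    | h x' y' => simp [mul_assoc]

lemma envAct_one (a : A) : envAct k A a 1 = a := by
  rw [one_eq_et]; simp

end Bar

/-! ### The Hochschild complex from the bar resolution -/

section Formula

variable {k} {A : Type u} [Ring A] [Algebra k A]

variable (k) in
/-- The class of `a₁ ⊗ ⋯ ⊗ aₙ` in `Ā^{⊗n}`. -/
def bt {n : ℕ} (a : Fin n → A) : BarV k A n :=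
  barVEquiv k A n (tprod k fun j => redPr k A (a j))

/-- The tuple `(a₁, …, aᵢ aᵢ₊₁, …)`. -/
def merge {n : ℕ} (a : Fin (n + 1) → A) (i j : Fin n) : A :=
  if (j : ℕ) < (i : ℕ) then a j.castSucc
  else if (j : ℕ) = (i : ℕ) then a i.castSucc * a i.succ
  else a j.succ

lemma cons_bt {n : ℕ} (x : A) (a : Fin n → A) :
    consEquiv k A n (redPr k A x ⊗ₜ bt k a) = bt k (Fin.cons x a : Fin (n + 1) → A) := by
  rw [bt, consEquiv_tprod, bt]
  congr 2
  funext j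
  refine Fin.cases ?_ (fun j => ?_) j <;> simp

lemma merge_zero {n : ℕ} (a : Fin (n + 2) → A) :
    merge a 0 = (Fin.cons (a 0 * a 1) fun j => a j.succ.succ : Fin (n + 1) → A) := by
  funext j
  refine Fin.cases ?_ (fun j => ?_) j <;> simp [merge]

lemma merge_succ {n : ℕ} (a : Fin (n + 2) → A) (i : Fin n) :
    merge a i.succ = (Fin.cons (a 0) (merge (fun j => a j.succ) i) : Fin (n + 1) → A) := by
  funext j
  refine Fin.cases ?_ (fun j => ?_) j <;> simp [merge]

/-- The usual formula for the bar differential. -/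
lemma barδ_bt {n : ℕ} (a : Fin (n + 1) → A) :
    barδ k A n (bt k a) = et k (a 0) 1 ⊗ₜ bt k (fun j => a j.succ)
      + (∑ i : Fin n, ((-1 : k) ^ ((i : ℕ) + 1)) • (et k 1 1 ⊗ₜ[k] bt k (merge a i)))
      + ((-1 : k) ^ (n + 1)) • (et k 1 (a (Fin.last n)) ⊗ₜ[k] bt k (fun j => a j.castSucc)) := by
  have ha : bt k a = consEquiv k A n (redPr k A (a 0) ⊗ₜ bt k (fun j => a j.succ)) := by
    rw [cons_bt]
    congr 1
    exact (Fin.cons_self_tail a).symm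
  have hneg : ∀ (n : ℕ) (c : k) (z : Env k A ⊗[k] BarV k A n), (-c) • z = -(c • z) :=
    fun n c z => neg_smul c z
  rw [ha, barδ_cons]
  induction n with
  | zero =>
    rw [barE_zero]
    have : (fun j : Fin 0 => a j.succ) = fun j => a j.castSucc := Subsingleton.elim _ _
    simp [this, sub_eq_add_neg, hneg]
  | succ n ih =>
    have ha' : bt k (fun j => a j.succ)
        = consEquiv k A n (redPr k A (a 1) ⊗ₜ bt k (fun j => a j.succ.succ)) := by
      rw [cons_bt]
      congr 1
      exact (Fin.cons_self_tail (fun j => a j.succ)).symm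
    have key := ih (fun j => a j.succ) ha'
    rw [barE_succ, ind_tmul]
    conv_lhs => enter [2, 2, 2, 2]; rw [ha']
    rw [barδ_cons]
    simp only [Fin.succ_zero_eq_one] at key
    rw [key, Fin.sum_univ_succ]
    have hl : (Fin.cons (a 0) fun j : Fin n => a j.castSucc.succ : Fin (n + 1) → A)
        = fun j => a j.castSucc := by
      funext j
      refine Fin.cases ?_ (fun j => ?_) j <;> simp
    simp only [map_add, map_sum, map_smul, LinearMap.rTensor_tmul, LinearMap.mul_apply', et_mul,
      barS_tmul, cons_bt, one_mul, mul_one, merge_zero, merge_succ, hl, Fin.succ_last,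
      Fin.val_succ, Fin.val_zero, pow_succ, pow_zero]
    simp only [hneg, one_smul, mul_neg, mul_one, Finset.sum_neg_distrib, neg_neg]
    abel

/-- The reduced Hochschild complex is obtained from the bar resolution by applying
`A ⊗_{A ⊗ Aᵒᵖ} -`. -/
lemma hochschild_eq {b : ∀ n : ℕ, CRed k A (n + 1) →ₗ[k] CRed k A n}
    (hb : IsRedHochschildDiff k A b) (n : ℕ) (x : CRed k A (n + 1)) :
    ind (envAct k A) (barδ k A n) ((barVEquiv k A (n + 1)).lTensor A x)
      = (barVEquiv k A n).lTensor A (b n x) := by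
  suffices ind (envAct k A) (barδ k A n) ∘ₗ ((barVEquiv k A (n + 1)).lTensor A).toLinearMap
      = ((barVEquiv k A n).lTensor A).toLinearMap ∘ₗ b n from LinearMap.congr_fun this x
  refine TensorProduct.ext (LinearMap.ext fun x₀ => PiTensorProduct.ext
    (MultilinearMap.ext fun v => ?_))
  choose a ha using fun j => redPr_surjective (k := k) (A := A) (v j)
  obtain rfl : (fun j => redPr k A (a j)) = v := funext ha
  change (envAct k A x₀).rTensor _ (barδ k A n (bt k a)) =
    (barVEquiv k A n).lTensor A (b n (x₀ ⊗ₜ tprod k fun j => redPr k A (a j)))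
  rw [hb]
  rw [barδ_bt]
  simp only [map_add, map_sum, map_smul, LinearMap.rTensor_tmul, envAct_et, one_mul, mul_one,
    LinearEquiv.lTensor_tmul]
  rfl

end Formula

/-! ### Tensor products of free resolutions -/

section TensorResolution

open DirectSum

variable {k}
variable {V W : ℕ → Type u} [∀ n, AddCommGroup (V n)] [∀ n, Module k (V n)]
  [∀ n, AddCommGroup (W n)] [∀ n, Module k (W n)]

section Shuffle

variable {X N N' Y M M' : Type u} [AddCommGroup X] [Module k X] [AddCommGroup N] [Module k N]
  [AddCommGroup N'] [Module k N'] [AddCommGroup Y] [Module k Y] [AddCommGroup M] [Module k M]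
  [AddCommGroup M'] [Module k M']

variable (V W) in
/-- For `X ≅ N ⊗ N'`, the isomorphism
`X ⊗ ⨁_{p+q=n} V p ⊗ W q ≅ ⨁_{p+q=n} (N ⊗ V p) ⊗ (N' ⊗ W q)`. -/
def shuf (κ : X ≃ₗ[k] N ⊗[k] N') (n : ℕ) :
    X ⊗[k] Tot k V W n ≃ₗ[k] Tot k (fun n => N ⊗[k] V n) (fun n => N' ⊗[k] W n) n :=
  TensorProduct.congr κ (LinearEquiv.refl k _) ≪≫ₗ
  TensorProduct.directSumRight k k (N ⊗[k] N') (fun i : Idx n => V i.1.1 ⊗[k] W i.1.2) ≪≫ₗ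
  DirectSum.congrLinearEquiv fun i : Idx n =>
    TensorProduct.tensorTensorTensorComm k N N' (V i.1.1) (W i.1.2)

lemma shuf_tmul (κ : X ≃ₗ[k] N ⊗[k] N') {p q n : ℕ} (h : p + q = n) (x : N) (x' : N') (v : V p)
    (w : W q) : shuf V W κ n (κ.symm (x ⊗ₜ x') ⊗ₜ tin k V W h (v ⊗ₜ w))
      = tin k (fun n => N ⊗[k] V n) (fun n => N' ⊗[k] W n) h ((x ⊗ₜ v) ⊗ₜ (x' ⊗ₜ w)) := by
  simp only [shuf, LinearEquiv.trans_apply, TensorProduct.congr_tmul, tin,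
    LinearEquiv.apply_symm_apply, LinearEquiv.refl_apply, TensorProduct.directSumRight_tmul_lof]
  exact (lmap_lof (ι := Idx n) (fun i : Idx n => (TensorProduct.tensorTensorTensorComm k N N'
    (V i.1.1) (W i.1.2)).toLinearMap) ⟨(p, q), h⟩ _).trans rfl

lemma shuf_ind (κ : X ≃ₗ[k] N ⊗[k] N') {U : Type u} [AddCommGroup U] [Module k U]
    {p : X ⊗[k] U → Prop} (h0 : p 0) (hadd : ∀ x y, p x → p y → p (x + y))
    (h : ∀ x x' u, p (κ.symm (x ⊗ₜ x') ⊗ₜ u)) (z) : p z := by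
  induction z with
  | zero => exact h0
  | add x y hx hy => exact hadd _ _ hx hy
  | tmul x u =>
    obtain ⟨x, rfl⟩ := κ.symm.surjective x
    induction x with
    | zero => rwa [map_zero, TensorProduct.zero_tmul]
    | add x y hx hy => rw [map_add, TensorProduct.add_tmul]; exact hadd _ _ hx hy
    | tmul x y => exact h x y u

/-- Naturality of `shuf` in the coefficients. -/
lemma shuf_nat (κ : X ≃ₗ[k] N ⊗[k] N') (μ : Y ≃ₗ[k] M ⊗[k] M') {α : X →ₗ[k] Y} {β : N →ₗ[k] M}
    {β' : N' →ₗ[k] M'} (hα : ∀ x x', α (κ.symm (x ⊗ₜ x')) = μ.symm (β x ⊗ₜ β' x')) (n : ℕ)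
    (z : X ⊗[k] Tot k V W n) :
    shuf V W μ n (α.rTensor _ z)
      = totMap (fun n => β.rTensor (V n)) (fun n => β'.rTensor (W n)) n (shuf V W κ n z) := by
  refine shuf_ind κ (p := fun z => shuf V W μ n (α.rTensor _ z)
      = totMap (fun n => β.rTensor (V n)) (fun n => β'.rTensor (W n)) n (shuf V W κ n z))
    (by simp) (fun x y hx hy => by simp only [map_add, hx, hy]) (fun x x' u => ?_) z
  suffices (shuf V W μ n).toLinearMap ∘ₗ α.rTensor _ ∘ₗ TensorProduct.mk k X _ (κ.symm (x ⊗ₜ x'))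
      = totMap (fun n => β.rTensor (V n)) (fun n => β'.rTensor (W n)) n ∘ₗ
        (shuf V W κ n).toLinearMap ∘ₗ TensorProduct.mk k X _ (κ.symm (x ⊗ₜ x')) from
    LinearMap.congr_fun this u
  refine tot_ext fun p q h v w => ?_
  simp only [LinearMap.comp_apply, LinearEquiv.coe_coe, TensorProduct.mk_apply,
    LinearMap.rTensor_tmul, hα, shuf_tmul, totMap_tin]

end Shuffle

variable {R R' S : Type u} [Ring R] [Algebra k R] [Ring R'] [Algebra k R'] [Ring S] [Algebra k S]

/-- The map `π` of a free resolution, extended by zero to positive degrees. -/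
def FreeRes.πAll (P : FreeRes k R V) : ∀ n, R ⊗[k] V n →ₗ[k] R ⊗[k] V n
  | 0 => P.π
  | _ + 1 => 0

variable (P : FreeRes k R V) (P' : FreeRes k R' W) (κ : S ≃ₗ[k] R ⊗[k] R')

lemma FreeRes.isRetract :
    IsRetract (C := fun n => R ⊗[k] V n) (fun n => rext (P.δ n)) P.s P.πAll where
  zero := P.ds_zero
  succ n x := (add_zero _).trans (P.ds_succ n x)
  πd n x := by
    cases n with
    | zero => exact P.πd x
    | succ n => rfl
  dπ n x := map_zero _

/-- The differential on the generators of the tensor product of two resolutions. -/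
def tensδ (n : ℕ) : Tot k V W (n + 1) →ₗ[k] S ⊗[k] Tot k V W n :=
  (shuf V W κ n).symm.toLinearMap ∘ₗ
    totD (C := fun n => R ⊗[k] V n) (D := fun n => R' ⊗[k] W n)
      (fun n => rext (P.δ n)) (fun n => rext (P'.δ n)) n ∘ₗ
    (shuf V W κ (n + 1)).toLinearMap ∘ₗ TensorProduct.mk k S _ 1

/-- Inducing the tensor product resolution along a right module `X ≅ N ⊗ N'` yields the tensor
product of the induced complexes. -/
lemma shuf_ind_tensδ {X N N' : Type u} [AddCommGroup X] [Module k X] [AddCommGroup N] [Module k N]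
    [AddCommGroup N'] [Module k N'] (μ : X ≃ₗ[k] N ⊗[k] N')
    {actX : X →ₗ[k] S →ₗ[k] X} {act : N →ₗ[k] R →ₗ[k] N} {act' : N' →ₗ[k] R' →ₗ[k] N'}
    (hX : ∀ x x' r r', actX (μ.symm (x ⊗ₜ x')) (κ.symm (r ⊗ₜ r'))
      = μ.symm (act x r ⊗ₜ act' x' r'))
    (hone : ∀ x, actX x 1 = x)
    (hact : ∀ n r r', act (act n r) r' = act n (r * r'))
    (hact' : ∀ n r r', act' (act' n r) r' = act' n (r * r')) (n : ℕ)
    (z : X ⊗[k] Tot k V W (n + 1)) :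
    totD (C := fun n => N ⊗[k] V n) (D := fun n => N' ⊗[k] W n)
        (fun n => ind act (P.δ n)) (fun n => ind act' (P'.δ n)) n (shuf V W μ (n + 1) z)
      = shuf V W μ n (ind actX (tensδ P P' κ n) z) := by
  refine shuf_ind μ (p := fun z => totD (C := fun n => N ⊗[k] V n) (D := fun n => N' ⊗[k] W n)
        (fun n => ind act (P.δ n)) (fun n => ind act' (P'.δ n)) n (shuf V W μ (n + 1) z)
      = shuf V W μ n (ind actX (tensδ P P' κ n) z)) (by simp)
    (fun x y hx hy => by simp only [map_add, hx, hy]) (fun x x' u => ?_) z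
  rw [ind_tmul, shuf_nat κ μ (hX x x')]
  simp only [tensδ, LinearMap.comp_apply, LinearEquiv.coe_coe, LinearEquiv.apply_symm_apply]
  have key := totMap_comm (C := fun n => R ⊗[k] V n) (D := fun n => R' ⊗[k] W n)
    (C' := fun n => N ⊗[k] V n) (D' := fun n => N' ⊗[k] W n)
    (dC := fun n => rext (P.δ n)) (dD := fun n => rext (P'.δ n))
    (dC' := fun n => ind act (P.δ n)) (dD' := fun n => ind act' (P'.δ n))
    (f := fun n => (act x).rTensor (V n)) (g := fun n => (act' x').rTensor (W n))
    (fun n y => ind_rTensor hact (P.δ n) x y) (fun n y => ind_rTensor hact' (P'.δ n) x' y) n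
    (shuf V W κ (n + 1) (1 ⊗ₜ u))
  rw [← shuf_nat κ μ (hX x x'), LinearMap.rTensor_tmul, hone] at key
  exact key

/-- The tensor product of two free resolutions, over a ring `S ≅ R ⊗ R'`. -/
def tensRes (hmul : ∀ r r' s s', κ.symm (r ⊗ₜ r') * κ.symm (s ⊗ₜ s')
      = κ.symm ((r * s) ⊗ₜ (r' * s'))) : FreeRes k S (Tot k V W) :=
  have comm : ∀ n z, totD (C := fun n => R ⊗[k] V n) (D := fun n => R' ⊗[k] W n)
        (fun n => rext (P.δ n)) (fun n => rext (P'.δ n)) n (shuf V W κ (n + 1) z)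
      = shuf V W κ n (rext (tensδ P P' κ n) z) :=
    shuf_ind_tensδ P P' κ κ (by simpa using hmul) (by simp) mul_act mul_act
  have HR := P.isRetract.tot P'.isRetract
  { δ := tensδ P P' κ
    s := fun n => (shuf V W κ (n + 1)).symm.toLinearMap ∘ₗ totH P.s P.πAll P'.s n ∘ₗ
      (shuf V W κ n).toLinearMap
    π := (shuf V W κ 0).symm.toLinearMap ∘ₗ totMap P.πAll P'.πAll 0 ∘ₗ (shuf V W κ 0).toLinearMap
    dd := fun n v => by
      apply (shuf V W κ n).injective
      rw [← rext_one (tensδ P P' κ (n + 1)), ← comm, ← comm, map_zero]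
      refine totD_totD _ _ (fun n x => ?_) (fun n x => ?_) n _
      · rw [ind_comp mul_act, show rext (P.δ n) ∘ₗ P.δ (n + 1) = 0 from LinearMap.ext (P.dd n),
          ind_zero, LinearMap.zero_apply]
      · rw [ind_comp mul_act, show rext (P'.δ n) ∘ₗ P'.δ (n + 1) = 0 from LinearMap.ext (P'.dd n),
          ind_zero, LinearMap.zero_apply]
    ds_zero := fun x => by
      apply (shuf V W κ 0).injective
      rw [map_add, ← comm]
      simpa using HR.zero (shuf V W κ 0 x)
    ds_succ := fun n x => by
      apply (shuf V W κ (n + 1)).injective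
      have h0 : totMap P.πAll P'.πAll (n + 1) = 0 := by
        refine tot_ext fun p q h x y => ?_
        rcases p with _ | p
        · rcases q with _ | q
          · omega
          · simp [FreeRes.πAll]
        · simp [FreeRes.πAll]
      have := HR.succ n (shuf V W κ (n + 1) x)
      rw [h0, LinearMap.zero_apply, add_zero] at this
      rw [map_add, ← comm]
      simp only [LinearMap.comp_apply, LinearEquiv.coe_coe, LinearEquiv.apply_symm_apply, ← comm]
      exact this
    πd := fun x => by
      apply (shuf V W κ 0).injective
      simp only [LinearMap.comp_apply, LinearEquiv.coe_coe, LinearEquiv.apply_symm_apply, ← comm]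
      rw [HR.πd, map_zero] }

end TensorResolution

/-! ### Hochschild homology of a tensor product of algebras -/

section Final

open DirectSum

variable {k} {A B T : Type u} [Ring A] [Algebra k A] [Ring B] [Algebra k B] [Ring T] [Algebra k T]

/-- A linear isomorphism `T ≅ A ⊗ B` induces `T ⊗ Tᵒᵖ ≅ (A ⊗ Aᵒᵖ) ⊗ (B ⊗ Bᵒᵖ)`. -/
def envTens (μ : T ≃ₗ[k] A ⊗[k] B) : Env k T ≃ₗ[k] Env k A ⊗[k] Env k B :=
  envEquiv k T ≪≫ₗ TensorProduct.congr μ μ ≪≫ₗ TensorProduct.tensorTensorTensorComm k A B A B ≪≫ₗ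
    TensorProduct.congr (envEquiv k A).symm (envEquiv k B).symm

lemma envTens_symm (μ : T ≃ₗ[k] A ⊗[k] B) (a a' : A) (b b' : B) :
    (envTens μ).symm (et k a a' ⊗ₜ et k b b') = et k (μ.symm (a ⊗ₜ b)) (μ.symm (a' ⊗ₜ b')) := by
  rw [LinearEquiv.symm_apply_eq]
  simp only [envTens, LinearEquiv.trans_apply, envEquiv_et, TensorProduct.congr_tmul,
    LinearEquiv.apply_symm_apply, TensorProduct.tensorTensorTensorComm_tmul]
  rfl

/-- Induction principle reducing a biadditive statement on enveloping algebras to pure tensors. -/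
lemma et_ind₂ {p : Env k A → Env k B → Prop} (h0 : ∀ s, p 0 s) (h0' : ∀ r, p r 0)
    (hadd : ∀ r r' s, p r s → p r' s → p (r + r') s)
    (hadd' : ∀ r s s', p r s → p r s' → p r (s + s'))
    (h : ∀ a a' b b', p (et k a a') (et k b b')) (r s) : p r s := by
  induction r using et_ind with
  | h0 => exact h0 s
  | hadd r r' hr hr' => exact hadd _ _ _ hr hr'
  | h a a' =>
    induction s using et_ind with
    | h0 => exact h0' _
    | hadd s s' hs hs' => exact hadd' _ _ _ hs hs'
    | h b b' => exact h a a' b b'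

lemma envTens_mul (μ : T ≃ₗ[k] A ⊗[k] B)
    (hμ : ∀ a b a' b', μ.symm (a ⊗ₜ b) * μ.symm (a' ⊗ₜ b') = μ.symm ((a * a') ⊗ₜ (b * b')))
    (r : Env k A) (s : Env k B) (r' : Env k A) (s' : Env k B) :
    (envTens μ).symm (r ⊗ₜ s) * (envTens μ).symm (r' ⊗ₜ s')
      = (envTens μ).symm ((r * r') ⊗ₜ (s * s')) := by
  refine et_ind₂ (p := fun r s => (envTens μ).symm (r ⊗ₜ s) * (envTens μ).symm (r' ⊗ₜ s')
      = (envTens μ).symm ((r * r') ⊗ₜ (s * s'))) (by simp) (by simp)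
    (fun r r' s hr hr' => ?_) (fun r s s' hs hs' => ?_) (fun a a' b b' => ?_) r s
  · simp only [TensorProduct.add_tmul, map_add, add_mul, hr, hr']
  · simp only [TensorProduct.tmul_add, map_add, add_mul, hs, hs']
  refine et_ind₂ (p := fun r' s' => (envTens μ).symm (et k a a' ⊗ₜ et k b b') *
      (envTens μ).symm (r' ⊗ₜ s')
      = (envTens μ).symm ((et k a a' * r') ⊗ₜ (et k b b' * s'))) (by simp) (by simp)
    (fun r r' s hr hr' => ?_) (fun r s s' hs hs' => ?_) (fun c c' d d' => ?_) r' s'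
  · simp only [TensorProduct.add_tmul, map_add, mul_add, hr, hr']
  · simp only [TensorProduct.tmul_add, map_add, mul_add, hs, hs']
  simp only [envTens_symm, et_mul, hμ]

lemma envTens_act (μ : T ≃ₗ[k] A ⊗[k] B)
    (hμ : ∀ a b a' b', μ.symm (a ⊗ₜ b) * μ.symm (a' ⊗ₜ b') = μ.symm ((a * a') ⊗ₜ (b * b')))
    (a : A) (b : B) (r : Env k A) (s : Env k B) :
    envAct k T (μ.symm (a ⊗ₜ b)) ((envTens μ).symm (r ⊗ₜ s))
      = μ.symm (envAct k A a r ⊗ₜ envAct k B b s) := by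
  refine et_ind₂ (p := fun r s => envAct k T (μ.symm (a ⊗ₜ b)) ((envTens μ).symm (r ⊗ₜ s))
      = μ.symm (envAct k A a r ⊗ₜ envAct k B b s)) (by simp) (by simp)
    (fun r r' s hr hr' => ?_) (fun r s s' hs hs' => ?_) (fun a a' b b' => ?_) r s
  · simp only [TensorProduct.add_tmul, map_add, hr, hr']
  · simp only [TensorProduct.tmul_add, map_add, hs, hs']
  simp only [envTens_symm, envAct_et, hμ]

lemma envTens_envMul (μ : T ≃ₗ[k] A ⊗[k] B)
    (hμ : ∀ a b a' b', μ.symm (a ⊗ₜ b) * μ.symm (a' ⊗ₜ b') = μ.symm ((a * a') ⊗ₜ (b * b')))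
    (r : Env k A) (s : Env k B) :
    envMul k T ((envTens μ).symm (r ⊗ₜ s)) = μ.symm (envMul k A r ⊗ₜ envMul k B s) := by
  refine et_ind₂ (p := fun r s => envMul k T ((envTens μ).symm (r ⊗ₜ s))
      = μ.symm (envMul k A r ⊗ₜ envMul k B s)) (by simp) (by simp)
    (fun r r' s hr hr' => ?_) (fun r s s' hs hs' => ?_) (fun a a' b b' => ?_) r s
  · simp only [TensorProduct.add_tmul, map_add, hr, hr']
  · simp only [TensorProduct.tmul_add, map_add, hs, hs']
  simp only [envTens_symm, envMul_et, hμ]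

variable (k) in
/-- `Ā^{⊗0} = k`. -/
def barVZero (A : Type u) [Ring A] [Algebra k A] : BarV k A 0 ≃ₗ[k] k :=
  (barVEquiv k A 0).symm ≪≫ₗ PiTensorProduct.isEmptyEquiv (Fin 0)

/-- The degree `0` part of a tensor product of graded spaces. -/
def totZero {C D : ℕ → Type u} [∀ n, AddCommGroup (C n)] [∀ n, Module k (C n)]
    [∀ n, AddCommGroup (D n)] [∀ n, Module k (D n)] : C 0 ⊗[k] D 0 ≃ₗ[k] Tot k C D 0 :=
  LinearEquiv.ofLinearMap (tin k C D rfl)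
    (DirectSum.component k (Idx 0) (fun i : Idx 0 => C i.1.1 ⊗[k] D i.1.2) ⟨(0, 0), rfl⟩)
    (tot_ext fun p q h x y => by
      obtain ⟨rfl, rfl⟩ : p = 0 ∧ q = 0 := by omega
      simp only [LinearMap.comp_apply, tin, LinearMap.id_apply]
      rw [DirectSum.component.lof_self])
    (LinearMap.ext fun x => by
      simp only [LinearMap.comp_apply, tin, LinearMap.id_apply]
      rw [DirectSum.component.lof_self])

/-- Both resolutions of `T` have a single generator in degree `0`. -/
def genZero : BarV k T 0 ≃ₗ[k] Tot k (BarV k A) (BarV k B) 0 :=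
  barVZero k T ≪≫ₗ (TensorProduct.lid k k).symm ≪≫ₗ
    TensorProduct.congr (barVZero k A).symm (barVZero k B).symm ≪≫ₗ totZero

lemma rext_mk_one {R V W : Type u} [Ring R] [Algebra k R] [AddCommGroup V] [Module k V]
    [AddCommGroup W] [Module k W] (θ : V →ₗ[k] W) :
    rext (TensorProduct.mk k R W 1 ∘ₗ θ) = θ.lTensor R := by
  ext r v
  simp

/-- The tensor product of the bar resolutions of `A` and `B`, a resolution over `T ⊗ Tᵒᵖ`. -/
def tensBar (μ : T ≃ₗ[k] A ⊗[k] B)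
    (hμ : ∀ a b a' b', μ.symm (a ⊗ₜ b) * μ.symm (a' ⊗ₜ b') = μ.symm ((a * a') ⊗ₜ (b * b'))) :
    FreeRes k (Env k T) (Tot k (BarV k A) (BarV k B)) :=
  tensRes (barRes k A) (barRes k B) (envTens μ) (envTens_mul μ hμ)

lemma swap_envMul {U U' : Type u} [AddCommGroup U] [Module k U] [AddCommGroup U'] [Module k U']
    (ρ : U →ₗ[k] U') (z : Env k T ⊗[k] U) :
    (envMul k T).rTensor U' (ρ.lTensor (Env k T) z)
      = ρ.lTensor T ((envMul k T).rTensor U z) := by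
  rw [← LinearMap.comp_apply, ← LinearMap.comp_apply, LinearMap.rTensor_comp_lTensor,
    LinearMap.lTensor_comp_rTensor]

lemma barRes_πAll : totMap (barRes k A).πAll (barRes k B).πAll 0
    = totMap (fun n => (etm k A 1).rTensor (BarV k A n))
        (fun n => (etm k B 1).rTensor (BarV k B n)) 0 ∘ₗ
      totMap (fun n => (envMul k A).rTensor (BarV k A n))
        (fun n => (envMul k B).rTensor (BarV k B n)) 0 := by
  refine tot_ext fun p q h x y => ?_
  obtain ⟨rfl, rfl⟩ : p = 0 ∧ q = 0 := by omega
  rw [LinearMap.comp_apply, totMap_tin, totMap_tin, totMap_tin, ← barE_zero_eq, ← barE_zero_eq]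
  rfl

/-- The defect of the tensor product homotopy factors through the augmentation of `T`. -/
lemma tensBar_π (μ : T ≃ₗ[k] A ⊗[k] B)
    (hμ : ∀ a b a' b', μ.symm (a ⊗ₜ b) * μ.symm (a' ⊗ₜ b') = μ.symm ((a * a') ⊗ₜ (b * b')))
    (z : Env k T ⊗[k] Tot k (BarV k A) (BarV k B) 0) (hz : (envMul k T).rTensor _ z = 0) :
    (tensBar μ hμ).π z = 0 := by
  have h1 := shuf_nat (V := BarV k A) (W := BarV k B) (envTens μ) μ (envTens_envMul μ hμ) 0 z
  rw [hz, map_zero] at h1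
  change (shuf _ _ _ 0).symm (totMap (barRes k A).πAll (barRes k B).πAll 0 (shuf _ _ _ 0 z)) = 0
  rw [barRes_πAll, LinearMap.comp_apply, ← h1, map_zero, map_zero]

/-- The augmentation of `T` kills the boundaries of the tensor product resolution. -/
lemma tensBar_δ (μ : T ≃ₗ[k] A ⊗[k] B)
    (hμ : ∀ a b a' b', μ.symm (a ⊗ₜ b) * μ.symm (a' ⊗ₜ b') = μ.symm ((a * a') ⊗ₜ (b * b')))
    (w : Tot k (BarV k A) (BarV k B) 1) :
    (envMul k T).rTensor _ ((tensBar μ hμ).δ 0 w) = 0 := by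
  apply (shuf (BarV k A) (BarV k B) μ 0).injective
  rw [shuf_nat (envTens μ) μ (envTens_envMul μ hμ), map_zero]
  have : totMap (fun n => (envMul k A).rTensor (BarV k A n))
          (fun n => (envMul k B).rTensor (BarV k B n)) 0 ∘ₗ
      totD (C := fun n => Env k A ⊗[k] BarV k A n) (D := fun n => Env k B ⊗[k] BarV k B n)
        (fun n => rext (barδ k A n)) (fun n => rext (barδ k B n)) 0 = 0 := by
    refine tot_ext fun p q h x y => ?_
    rcases p with _ | p <;> rcases q with _ | q
    · omega
    · obtain rfl : q = 0 := by omega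
      rw [LinearMap.comp_apply, totD_zs, totMap_tin, envMul_barδ]
      simp
    · obtain rfl : p = 0 := by omega
      rw [LinearMap.comp_apply, totD_sz, totMap_tin, envMul_barδ]
      simp
    · omega
  have e : shuf _ _ (envTens μ) 0 ((tensBar μ hμ).δ 0 w)
      = totD (C := fun n => Env k A ⊗[k] BarV k A n)
      (D := fun n => Env k B ⊗[k] BarV k B n) (fun n => rext (barδ k A n))
      (fun n => rext (barδ k B n)) 0 (shuf _ _ (envTens μ) 1 (1 ⊗ₜ w)) :=
    LinearEquiv.apply_symm_apply _ _
  rw [e]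
  exact LinearMap.congr_fun this _

/-- The bar resolution of `T` and the tensor product of those of `A` and `B` compute the same
homology. -/
lemma tensBar_comparison (μ : T ≃ₗ[k] A ⊗[k] B)
    (hμ : ∀ a b a' b', μ.symm (a ⊗ₜ b) * μ.symm (a' ⊗ₜ b') = μ.symm ((a * a') ⊗ₜ (b * b')))
    (n : ℕ) :
    Nonempty (homologyOf k (M := fun n => T ⊗[k] BarV k T n)
        (fun n => ind (envAct k T) (barδ k T n)) n ≃ₗ[k]
      homologyOf k (M := fun n => T ⊗[k] Tot k (BarV k A) (BarV k B) n)
        (fun n => ind (envAct k T) ((tensBar μ hμ).δ n)) n) := by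
  let θ : BarV k T 0 ≃ₗ[k] Tot k (BarV k A) (BarV k B) 0 := genZero
  refine comparison (barRes k T) (tensBar μ hμ) (act := envAct k T) envAct_act envAct_one
    (f₀ := TensorProduct.mk k _ _ 1 ∘ₗ θ.toLinearMap)
    (g₀ := TensorProduct.mk k _ _ 1 ∘ₗ θ.symm.toLinearMap) ?_ ?_ ?_ ?_ n
  · intro v
    rw [rext_mk_one]
    apply tensBar_π
    have := envMul_barδ (k := k) (A := T) (1 ⊗ₜ v)
    rw [rext_one] at this
    rw [swap_envMul]
    exact (congrArg _ this).trans (map_zero _)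
  · intro w
    rw [rext_mk_one]
    refine (barE_zero_eq _).trans ?_
    rw [swap_envMul, tensBar_δ, map_zero, map_zero]
  · intro v
    rw [rext_mk_one]
    simp
  · intro v
    rw [rext_mk_one]
    simp

/-- The reduced Hochschild complex of `T ≅ A ⊗ B` has the homology of the tensor product of the
reduced Hochschild complexes of `A` and `B`. -/
theorem hochschild_tensor (μ : T ≃ₗ[k] A ⊗[k] B)
    (hμ : ∀ a b a' b', μ.symm (a ⊗ₜ b) * μ.symm (a' ⊗ₜ b') = μ.symm ((a * a') ⊗ₜ (b * b')))
    (n : ℕ) :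
    Nonempty (homologyOf k (M := fun n => T ⊗[k] BarV k T n)
        (fun n => ind (envAct k T) (barδ k T n)) n ≃ₗ[k]
      homologyOf k (totD (C := fun n => A ⊗[k] BarV k A n) (D := fun n => B ⊗[k] BarV k B n)
        (fun n => ind (envAct k A) (barδ k A n)) (fun n => ind (envAct k B) (barδ k B n))) n) := by
  obtain ⟨e₁⟩ := tensBar_comparison μ hμ n
  obtain ⟨e₂⟩ := homology_equiv_of_iso (C := fun n => T ⊗[k] Tot k (BarV k A) (BarV k B) n)
    (D := Tot k (fun n => A ⊗[k] BarV k A n) (fun n => B ⊗[k] BarV k B n))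
    (dC := fun n => ind (envAct k T) ((tensBar μ hμ).δ n))
    (dD := totD (C := fun n => A ⊗[k] BarV k A n) (D := fun n => B ⊗[k] BarV k B n)
        (fun n => ind (envAct k A) (barδ k A n)) (fun n => ind (envAct k B) (barδ k B n)))
    (fun n => shuf (BarV k A) (BarV k B) μ n)
    (shuf_ind_tensδ (barRes k A) (barRes k B) (envTens μ) μ (envTens_act μ hμ)
      envAct_one envAct_act envAct_act) n
  exact ⟨e₁ ≪≫ₗ e₂⟩

lemma ind_barδ_sq (n : ℕ) (x : A ⊗[k] BarV k A (n + 1 + 1)) :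
    ind (envAct k A) (barδ k A n) (ind (envAct k A) (barδ k A (n + 1)) x) = 0 := by
  rw [ind_comp envAct_act, show rext (barδ k A n) ∘ₗ barδ k A (n + 1) = 0 from
    LinearMap.ext (bar_dd n), ind_zero, LinearMap.zero_apply]

lemma hochschild_equiv {b : ∀ n : ℕ, CRed k A (n + 1) →ₗ[k] CRed k A n}
    (hb : IsRedHochschildDiff k A b) (n : ℕ) :
    Nonempty (homologyOf k b n ≃ₗ[k] homologyOf k (M := fun n => A ⊗[k] BarV k A n)
      (fun n => ind (envAct k A) (barδ k A n)) n) :=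
  homology_equiv_of_iso (C := CRed k A) (fun n => (barVEquiv k A n).lTensor A)
    (hochschild_eq hb) n

/-- The Künneth formula for an algebra `T` with an identification `T ≅ A ⊗ B` compatible with
products. -/
theorem hochschild_kunneth (μ : T ≃ₗ[k] A ⊗[k] B)
    (hμ : ∀ a b a' b', μ.symm (a ⊗ₜ b) * μ.symm (a' ⊗ₜ b') = μ.symm ((a * a') ⊗ₜ (b * b')))
    {bA : ∀ n : ℕ, CRed k A (n + 1) →ₗ[k] CRed k A n} (hbA : IsRedHochschildDiff k A bA)
    {bB : ∀ n : ℕ, CRed k B (n + 1) →ₗ[k] CRed k B n} (hbB : IsRedHochschildDiff k B bB)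
    {bT : ∀ n : ℕ, CRed k T (n + 1) →ₗ[k] CRed k T n} (hbT : IsRedHochschildDiff k T bT)
    (n : ℕ) :
    Nonempty (homologyOf k bT n ≃ₗ[k]
      ⨁ p : Fin (n + 1), homologyOf k bA (p : ℕ) ⊗[k] homologyOf k bB (n - (p : ℕ))) := by
  obtain ⟨e₁⟩ := hochschild_equiv hbT n
  obtain ⟨e₂⟩ := hochschild_tensor μ hμ n
  obtain ⟨e₃⟩ := kunneth (C := fun n => A ⊗[k] BarV k A n) (D := fun n => B ⊗[k] BarV k B n)
    (fun n => ind (envAct k A) (barδ k A n)) (fun n => ind (envAct k B) (barδ k B n))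
    ind_barδ_sq ind_barδ_sq n
  have eA := fun p => (hochschild_equiv hbA p).some
  have eB := fun q => (hochschild_equiv hbB q).some
  exact ⟨e₁ ≪≫ₗ e₂ ≪≫ₗ e₃ ≪≫ₗ totEquivFin n ≪≫ₗ DirectSum.congrLinearEquiv fun p =>
    TensorProduct.congr (eA p).symm (eB (n - p)).symm⟩

end Final

end
end HochschildKunneth

set_option synthInstance.maxHeartbeats 1000000 in
set_option maxHeartbeats 2000000 in
/-- **Künneth formula for Hochschild homology.**
Let `k` be a field and `A`, `B` unital associative `k`-algebras, and let `b_A`, `b_B`,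
`b_{A⊗B}` be the Hochschild differentials of the reduced Hochschild complexes of `A`, `B`
and of `A ⊗ₖ B` (with its componentwise multiplication).  Then for every `n ≥ 0` there
is an isomorphism of `k`-vector spaces
`HHₙ(A ⊗ₖ B) ≅ ⊕_{p+q=n} HH_p(A) ⊗ₖ HH_q(B)`. -/
theorem statement11 (A B : Type u) [Ring A] [Algebra k A] [Ring B] [Algebra k B]
    (bA : ∀ n : ℕ, CRed k A (n + 1) →ₗ[k] CRed k A n)
    (hbA : IsRedHochschildDiff k A bA)
    (bB : ∀ n : ℕ, CRed k B (n + 1) →ₗ[k] CRed k B n)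
    (hbB : IsRedHochschildDiff k B bB)
    (bT : ∀ n : ℕ, CRed k (A ⊗[k] B) (n + 1) →ₗ[k] CRed k (A ⊗[k] B) n)
    (hbT : IsRedHochschildDiff k (A ⊗[k] B) bT)
    (n : ℕ) :
    Nonempty ((homologyOf k bT n) ≃ₗ[k]
      DirectSum (Fin (n + 1))
        (fun p => (homologyOf k bA (p : ℕ)) ⊗[k] (homologyOf k bB (n - (p : ℕ))))) := by
  exact HochschildKunneth.hochschild_kunneth
    (show A ⊗[k] B ≃ₗ[k] A ⊗[k] B from LinearEquiv.refl k (A ⊗[k] B))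
    (fun a b a' b' => Algebra.TensorProduct.tmul_mul_tmul a a' b b') hbA hbB hbT n
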